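/- arXiv:nlin/0406059 — 10 statements merged into one kernel-verified Lean document; each statement's English description precedes it below -/
import Mathlib

section
/- Let 1 ≤ N ≤ M. Then the N×N Hankel determinant det( f_{n+k+k'}(x) )_{0≤k,k'≤N−1}, where f_m(x) = Σ_{j=1}^M exp(θ_m^{(j)}(x)), equals Σ_{1≤i_1<⋯<i_N≤M} Δ(i_1,…,i_N)·exp( Σ_{j=1}^N θ_n^{(i_j)}(x) ), where Δ(i_1,…,i_N) = ∏_{1≤j<l≤N} (p_{i_j} − p_{i_l})² is the square of the van der Monde determinant. -/
open scoped Classical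

/-!
With `V j k = p j ^ k` and `w j = exp (θ j n)`, the Hankel matrix is `Vᵀ * diagonal w * V`, because
raising the index of the phase by `k` multiplies its exponential by `p j ^ k`. The Cauchy–Binet
formula expands its determinant over the `N`-element subsets of the index set, and each maximal
minor of `V` is a Vandermonde determinant.
-/

open Equiv Finset Function Matrix

section CauchyBinet

variable {N : ℕ} {J : Type*} [LinearOrder J]

lemma bijOn_comp_perm_strictMono_injective :
    Set.BijOn (fun q : (Fin N → J) × Perm (Fin N) => q.1 ∘ q.2)
      {q | StrictMono q.1} {ι | Injective ι} := by
  refine ⟨fun q hq => hq.injective.comp q.2.injective, ?_, fun ι hι => ?_⟩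
  · rintro ⟨ι, σ⟩ (hι : StrictMono ι) ⟨κ, τ⟩ (hκ : StrictMono κ) (hcomp : ι ∘ σ = κ ∘ τ)
    have hrange : Set.range ι = Set.range κ := by
      rw [← σ.surjective.range_comp ι, hcomp, τ.surjective.range_comp κ]
    obtain rfl : ι = κ := (hι.range_inj hκ).1 hrange
    rw [Equiv.ext fun a => hι.injective (congrFun hcomp a)]
  · refine ⟨(ι ∘ Tuple.sort ι, (Tuple.sort ι)⁻¹), ?_, by ext; simp⟩
    exact (Tuple.monotone_sort ι).strictMono_of_injective (hι.comp (Tuple.sort ι).injective)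

lemma sum_eq_sum_strictMono_sum_perm [Fintype J] {A : Type*} [AddCommMonoid A]
    (F : (Fin N → J) → A) (hF : ∀ ι, ¬ Injective ι → F ι = 0) :
    ∑ ι, F ι = ∑ ι with StrictMono ι, ∑ σ : Perm (Fin N), F (ι ∘ σ) := by
  have hbij := bijOn_comp_perm_strictMono_injective (N := N) (J := J)
  calc ∑ ι, F ι
      = ∑ ι with Injective ι, F ι :=
        (sum_filter_of_ne fun ι _ hne => not_imp_comm.1 (hF ι) hne).symm
    _ = ∑ q : (Fin N → J) × Perm (Fin N) with StrictMono q.1, F (q.1 ∘ q.2) :=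
        (sum_nbij (fun q : (Fin N → J) × Perm (Fin N) => q.1 ∘ q.2)
          (by simpa [Set.MapsTo] using hbij.mapsTo) (by simpa using hbij.injOn)
          (by simpa using hbij.surjOn) fun _ _ => rfl).symm
    _ = ∑ ι with StrictMono ι, ∑ σ : Perm (Fin N), F (ι ∘ σ) := by
        rw [← sum_product']
        exact sum_congr (by ext; simp) fun _ _ => rfl

variable {R : Type*} [CommRing R]

lemma det_mul_eq_sum_prod_mul_det_submatrix {n m : Type*} [Fintype n] [DecidableEq n] [Fintype m]
    (A : Matrix n m R) (B : Matrix m n R) :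
    (A * B).det = ∑ ι : n → m, (∏ k, A k (ι k)) * (B.submatrix ι id).det := by
  have hrows : A * B = fun k => ∑ j, A k j • B j := by
    ext k l
    simp [mul_apply]
  rw [hrows]
  refine (detRowAlternating.toMultilinearMap.map_sum fun k j => A k j • B j).trans ?_
  exact sum_congr rfl fun ι _ => det_mul_column (fun k => A k (ι k)) (B.submatrix ι id)

theorem det_mul_eq_sum_strictMono_det_mul_det [Fintype J]
    (A : Matrix (Fin N) J R) (B : Matrix J (Fin N) R) :
    (A * B).det =
      ∑ ι with StrictMono ι, (A.submatrix id ι).det * (B.submatrix ι id).det := by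
  have hrepeat (ι : Fin N → J) (hι : ¬ Injective ι) :
      (∏ k, A k (ι k)) * (B.submatrix ι id).det = 0 := by
    obtain ⟨a, b, hab, hne⟩ := not_injective_iff.1 hι
    rw [det_zero_of_row_eq hne (by ext; simp [hab]), mul_zero]
  have hperm (ι : Fin N → J) (σ : Perm (Fin N)) :
      (B.submatrix (ι ∘ σ) id).det = Perm.sign σ * (B.submatrix ι id).det :=
    det_permute σ (B.submatrix ι id)
  rw [det_mul_eq_sum_prod_mul_det_submatrix, sum_eq_sum_strictMono_sum_perm _ hrepeat]
  refine sum_congr rfl fun ι _ => ?_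
  rw [← det_transpose (A.submatrix id ι), det_apply', sum_mul]
  refine sum_congr rfl fun σ _ => ?_
  rw [hperm]
  simp only [transpose_apply, submatrix_apply, id_eq, Function.comp_apply]
  ring

end CauchyBinet

section Hankel

variable {N : ℕ} {R : Type*} [CommRing R]

lemma det_vandermonde_sq (v : Fin N → R) :
    (vandermonde v).det ^ 2 = ∏ a, ∏ b, if a < b then (v a - v b) ^ 2 else 1 := by
  simp only [det_vandermonde, ← prod_pow, ← prod_filter, filter_lt_eq_Ioi, sub_sq_comm]

theorem det_hankel_sum_mul_pow {J : Type*} [Fintype J] [LinearOrder J] (w p : J → R) :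
    (of fun k k' : Fin N => ∑ j, w j * p j ^ (k + k' : ℕ)).det =
      ∑ ι : Fin N → J with StrictMono ι, (vandermonde (p ∘ ι)).det ^ 2 * ∏ k, w (ι k) := by
  let V : Matrix J (Fin N) R := of fun j k => p j ^ (k : ℕ)
  have hfactor : (of fun k k' : Fin N => ∑ j, w j * p j ^ (k + k' : ℕ)) =
      Vᵀ * diagonal w * V := by
    ext k k'
    rw [mul_apply]
    simp only [V, of_apply, mul_diagonal, transpose_apply]
    exact sum_congr rfl fun j _ => by ring
  have hleft (ι : Fin N → J) : (Vᵀ * diagonal w).submatrix id ι =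
      (vandermonde (p ∘ ι))ᵀ * diagonal (w ∘ ι) := by
    ext k l
    simp [V, vandermonde_apply]
  have hright (ι : Fin N → J) : V.submatrix ι id = vandermonde (p ∘ ι) := rfl
  rw [hfactor, det_mul_eq_sum_strictMono_det_mul_det]
  refine sum_congr rfl fun ι _ => ?_
  rw [hleft, hright, det_mul, det_transpose, det_diagonal]
  simp only [Function.comp_apply]
  ring

end Hankel

lemma exp_add_natCast_mul_log {q : ℝ} (hq : 0 < q) (a : ℝ) (k : ℕ) :
    Real.exp (a + k * Real.log q) = Real.exp a * q ^ k := by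
  rw [Real.exp_add, Real.exp_nat_mul, Real.exp_log hq]

theorem stmt_0_general {N : ℕ} {J : Type*} [Fintype J] [LinearOrder J]
    (p : J → ℝ) (hp : ∀ j, 0 < p j) (φ : J → ℝ)
    (θ : J → ℤ → ℝ) (hθ : ∀ j m, θ j m = m * Real.log (p j) + φ j)
    (f : ℤ → ℝ) (hf : ∀ m, f m = ∑ j, Real.exp (θ j m)) (n : ℤ) :
    (of fun k k' : Fin N => f (n + ((k : ℕ) : ℤ) + ((k' : ℕ) : ℤ))).det =
      ∑ ι : Fin N → J,
        if StrictMono ι then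
          (∏ a, ∏ b, if a < b then (p (ι a) - p (ι b)) ^ 2 else 1) *
            Real.exp (∑ j, θ (ι j) n)
        else 0 := by
  have hshift (j : J) (k k' : ℕ) :
      Real.exp (θ j (n + k + k')) = Real.exp (θ j n) * p j ^ (k + k') := by
    rw [← exp_add_natCast_mul_log (hp j), hθ, hθ]
    push_cast
    ring_nf
  simp only [hf, hshift, det_hankel_sum_mul_pow, det_vandermonde_sq, sum_filter, Real.exp_sum,
    Function.comp_apply]

/-- The N×N Hankel determinant of `f` equals the sum over strictly
increasing index tuples of the squared van der Monde determinant times the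
exponential of the sum of the corresponding phases. -/
theorem stmt_0 (M N : ℕ) (hM : 1 ≤ M) (hN : 1 ≤ N) (hNM : N ≤ M)
    (p : Fin M → ℝ) (hp : ∀ j, 0 < p j) (hpmono : StrictMono p)
    (θ0 : Fin M → ℝ) (t : ℝ)
    (θ : Fin M → ℤ → ℝ → ℝ)
    (hθ : ∀ j m x, θ j m x = (m : ℝ) * Real.log (p j) + p j * x - t / p j + θ0 j)
    (f : ℤ → ℝ → ℝ)
    (hf : ∀ m x, f m x = ∑ j, Real.exp (θ j m x))
    (n : ℤ) (x : ℝ) :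
    Matrix.det (Matrix.of fun k k' : Fin N => f (n + ((k : ℕ) : ℤ) + ((k' : ℕ) : ℤ)) x) =
      ∑ ι : Fin N → Fin M,
        if StrictMono ι then
          (∏ a : Fin N, ∏ b : Fin N, if a < b then (p (ι a) - p (ι b)) ^ 2 else 1) *
            Real.exp (∑ j, θ (ι j) n x)
        else 0 := by
  refine stmt_0_general p hp (fun j => p j * x - t / p j + θ0 j) (fun j m => θ j m x)
    (fun j m => ?_) (fun m => f m x) (fun m => hf m x) n
  rw [hθ]
  ring
end

section
/- Let 1 ≤ N ≤ M. Then the N×N Hankel determinant det( f_{n+k+k'}(x) )_{0≤k,k'≤N−1}, where f_m(x) = Σ_{j=1}^M exp(θ_m^{(j)}(x)), is strictly positive for every n ∈ ℤ and x ∈ ℝ. -/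
/-!
Shifting the index of a phase by `k` multiplies its exponential by `p_j ^ k`, so the Hankel matrix
is `Vᵀ D V`, where `V = (p_j ^ k)` is the rectangular Vandermonde matrix and `D` is the diagonal
matrix of the weights `exp θ_n^{(j)} > 0`. A polynomial of degree less than `N` cannot vanish at
`M ≥ N` distinct nodes, so `V` is injective and `Vᵀ D V` is positive definite.
-/

open Matrix

section WeightedMoments

variable {ι R : Type*} [Fintype ι] [CommRing R]

theorem rectVandermonde_one_mulVec_injective [IsDomain R] {p : ι → R}
    (hp : Function.Injective p) {N : ℕ} (hN : N ≤ Fintype.card ι) :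
    Function.Injective (rectVandermonde p 1 N).mulVec := by
  obtain ⟨e⟩ : Nonempty (Fin N ↪ ι) := Function.Embedding.nonempty_of_card_le (by simpa using hN)
  refine (injective_iff_map_eq_zero (rectVandermonde p 1 N).mulVecLin).mpr fun v hv ↦ ?_
  refine eq_zero_of_forall_index_sum_pow_mul_eq_zero (hp.comp e.injective) fun i ↦ ?_
  simpa [mulVec, dotProduct, rectVandermonde_apply] using congrFun hv (e i)

theorem transpose_mul_diagonal_mul_rectVandermonde_one [DecidableEq ι] (w p : ι → R) (N : ℕ) :
    (rectVandermonde p 1 N)ᵀ * diagonal w * rectVandermonde p 1 N =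
      of fun k k' : Fin N ↦ ∑ j, w j * p j ^ (k + k' : ℕ) := by
  ext k k'
  simp only [mul_apply (M := _ * _), mul_diagonal, transpose_apply, rectVandermonde_apply,
    Pi.one_apply, one_pow, mul_one, of_apply, pow_add]
  exact Finset.sum_congr rfl fun j _ ↦ by ring

theorem posDef_hankel_sum_mul_pow [IsDomain R] [PartialOrder R] [StarRing R] [StarOrderedRing R]
    [TrivialStar R] {w p : ι → R} (hw : ∀ j, 0 < w j) (hp : Function.Injective p) {N : ℕ}
    (hN : N ≤ Fintype.card ι) :
    (of fun k k' : Fin N ↦ ∑ j, w j * p j ^ (k + k' : ℕ)).PosDef := by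
  classical
  rw [← transpose_mul_diagonal_mul_rectVandermonde_one, ← conjTranspose_eq_transpose_of_trivial]
  exact (PosDef.diagonal hw).conjTranspose_mul_mul_same
    (rectVandermonde_one_mulVec_injective hp hN)

end WeightedMoments

theorem exp_add_natCast_mul_log_add {p : ℝ} (hp : 0 < p) (y c : ℝ) (k : ℕ) :
    Real.exp ((y + k) * Real.log p + c) = Real.exp (y * Real.log p + c) * p ^ k := by
  rw [add_mul, add_right_comm, Real.exp_add, Real.exp_nat_mul, Real.exp_log hp]

/-- The N×N Hankel determinant of `f` is strictly positive for
every `n ∈ ℤ` and `x ∈ ℝ`. -/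
theorem stmt_1 (M N : ℕ) (hM : 1 ≤ M) (hN : 1 ≤ N) (hNM : N ≤ M)
    (p : Fin M → ℝ) (hp : ∀ j, 0 < p j) (hpmono : StrictMono p)
    (θ0 : Fin M → ℝ) (t : ℝ)
    (θ : Fin M → ℤ → ℝ → ℝ)
    (hθ : ∀ j m x, θ j m x = (m : ℝ) * Real.log (p j) + p j * x - t / p j + θ0 j)
    (f : ℤ → ℝ → ℝ)
    (hf : ∀ m x, f m x = ∑ j, Real.exp (θ j m x))
    (n : ℤ) (x : ℝ) :
    0 < Matrix.det (Matrix.of fun k k' : Fin N => f (n + ((k : ℕ) : ℤ) + ((k' : ℕ) : ℤ)) x) := by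
  have exp_θ_add (j : Fin M) (k : ℕ) :
      Real.exp (θ j (n + k) x) = Real.exp (θ j n x) * p j ^ k := by
    simp only [hθ, add_sub_assoc, add_assoc _ (_ - _), Int.cast_add, Int.cast_natCast,
      exp_add_natCast_mul_log_add (hp j)]
  have f_add (k k' : ℕ) : f (n + k + k') x = ∑ j, Real.exp (θ j n x) * p j ^ (k + k') := by
    simp only [hf, ← exp_θ_add, Nat.cast_add, add_assoc]
  simp only [f_add]
  exact (posDef_hankel_sum_mul_pow (fun _ ↦ Real.exp_pos _) hpmono.injective
    (by simpa using hNM)).det_pos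
end

section
/- Let M = 2 with 0 < p_1 < p_2, and let τ_n(x,t) = exp(θ_n^{(1)}(x,t)) + exp(θ_n^{(2)}(x,t)). Then the mixed second partial derivative ∂²/(∂x∂t) log τ_n(x,t) equals −(1/4)·(p_1−p_2)·(1/p_1 − 1/p_2)·( 1 / cosh²( (θ_n^{(1)}(x,t) − θ_n^{(2)}(x,t))/2 ) ) for all n ∈ ℤ, x ∈ ℝ, t ∈ ℝ. -/
/-!
Factoring out the mean phase gives `exp a + exp b = 2 * exp ((a + b) / 2) * cosh ((a - b) / 2)`.
So, up to the mean phase, `log τ` is `log cosh` of half the phase difference: the phases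
having constant `t`-slopes, its `t`-derivative is an affine function of `tanh` of that
half-difference, and differentiating `tanh` in `x` produces `sech²`.
-/

open Real

theorem exp_add_exp_eq_two_mul_exp_mul_cosh (a b : ℝ) :
    exp a + exp b = 2 * exp ((a + b) / 2) * cosh ((a - b) / 2) := by
  have h_left : exp a = exp ((a + b) / 2) * exp ((a - b) / 2) := by
    rw [← exp_add]; ring_nf
  have h_right : exp b = exp ((a + b) / 2) * exp (-((a - b) / 2)) := by
    rw [← exp_add]; ring_nf
  rw [h_left, h_right, cosh_eq]
  ring

theorem log_exp_add_exp (a b : ℝ) :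
    log (exp a + exp b) = log 2 + (a + b) / 2 + log (cosh ((a - b) / 2)) := by
  rw [exp_add_exp_eq_two_mul_exp_mul_cosh, log_mul (by positivity) (cosh_pos _).ne',
    log_mul two_ne_zero (exp_ne_zero _), log_exp]

theorem hasDerivAt_log_cosh (x : ℝ) : HasDerivAt (fun y => log (cosh y)) (tanh x) x := by
  simpa only [tanh_eq_sinh_div_cosh] using (hasDerivAt_cosh x).log (cosh_pos x).ne'

theorem hasDerivAt_tanh (x : ℝ) : HasDerivAt tanh (1 / cosh x ^ 2) x := by
  have h_quot := (hasDerivAt_sinh x).div (hasDerivAt_cosh x) (cosh_pos x).ne'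
  have h_numerator : cosh x * cosh x - sinh x * sinh x = 1 := by
    linear_combination cosh_sq_sub_sinh_sq x
  rw [h_numerator] at h_quot
  exact h_quot.congr_of_eventuallyEq (.of_forall tanh_eq_sinh_div_cosh)

theorem hasDerivAt_log_exp_add_exp {u v : ℝ → ℝ} {u' v' t : ℝ}
    (hu : HasDerivAt u u' t) (hv : HasDerivAt v v' t) :
    HasDerivAt (fun s => log (exp (u s) + exp (v s)))
      ((u' + v') / 2 + tanh ((u t - v t) / 2) * ((u' - v') / 2)) t := by
  have h_mean : HasDerivAt (fun s => log 2 + (u s + v s) / 2) ((u' + v') / 2) t :=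
    ((hu.add hv).div_const 2).const_add (log 2)
  have h_log_cosh : HasDerivAt (fun s => log (cosh ((u s - v s) / 2)))
      (tanh ((u t - v t) / 2) * ((u' - v') / 2)) t :=
    (hasDerivAt_log_cosh _).comp t ((hu.sub hv).div_const 2)
  simp only [log_exp_add_exp]
  exact h_mean.add h_log_cosh

section Phase

variable {θ : ℝ → ℝ → ℝ} {a p c : ℝ}

theorem hasDerivAt_phase_space (hθ : ∀ x t, θ x t = a + p * x - t / p + c) (x t : ℝ) :
    HasDerivAt (fun y => θ y t) p x := by
  simpa [hθ] using
    ((((hasDerivAt_id x).const_mul p).const_add a).sub_const (t / p)).add_const c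

theorem hasDerivAt_phase_time (hθ : ∀ x t, θ x t = a + p * x - t / p + c) (x t : ℝ) :
    HasDerivAt (θ x) (-(1 / p)) t := by
  simpa [funext (hθ x)] using
    (((hasDerivAt_id t).div_const p).const_sub (a + p * x)).add_const c

end Phase

theorem stmt_3_general {θ₁ θ₂ : ℝ → ℝ → ℝ} {k₁ k₂ ω₁ ω₂ x t : ℝ}
    (hx₁ : HasDerivAt (fun y => θ₁ y t) k₁ x) (hx₂ : HasDerivAt (fun y => θ₂ y t) k₂ x)
    (ht₁ : ∀ y, HasDerivAt (θ₁ y) ω₁ t) (ht₂ : ∀ y, HasDerivAt (θ₂ y) ω₂ t) :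
    HasDerivAt (fun y => deriv (fun s => log (exp (θ₁ y s) + exp (θ₂ y s))) t)
      (1 / 4 * (k₁ - k₂) * (ω₁ - ω₂) * (1 / cosh ((θ₁ x t - θ₂ x t) / 2) ^ 2)) x := by
  have h_time (y : ℝ) : deriv (fun s => log (exp (θ₁ y s) + exp (θ₂ y s))) t =
      (ω₁ + ω₂) / 2 + tanh ((θ₁ y t - θ₂ y t) / 2) * ((ω₁ - ω₂) / 2) :=
    (hasDerivAt_log_exp_add_exp (ht₁ y) (ht₂ y)).deriv
  have h_tanh : HasDerivAt (fun y => tanh ((θ₁ y t - θ₂ y t) / 2))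
      (1 / cosh ((θ₁ x t - θ₂ x t) / 2) ^ 2 * ((k₁ - k₂) / 2)) x :=
    (hasDerivAt_tanh _).comp x ((hx₁.sub hx₂).div_const 2)
  simp only [h_time]
  exact ((h_tanh.mul_const ((ω₁ - ω₂) / 2)).const_add ((ω₁ + ω₂) / 2)).congr_deriv (by ring)

/-- For M = 2, the mixed second partial derivative
`∂²/(∂x∂t) log τ_n(x,t)` equals the one-soliton profile
`−(1/4)(p₁−p₂)(1/p₁−1/p₂) sech²((θ¹−θ²)/2)`. -/
theorem stmt_3 (p₁ p₂ : ℝ) (hp₁ : 0 < p₁) (h₁₂ : p₁ < p₂)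
    (θ01 θ02 : ℝ)
    (θ1 θ2 : ℤ → ℝ → ℝ → ℝ)
    (hθ1 : ∀ n x t, θ1 n x t = (n : ℝ) * Real.log p₁ + p₁ * x - t / p₁ + θ01)
    (hθ2 : ∀ n x t, θ2 n x t = (n : ℝ) * Real.log p₂ + p₂ * x - t / p₂ + θ02)
    (τ : ℤ → ℝ → ℝ → ℝ)
    (hτ : ∀ n x t, τ n x t = Real.exp (θ1 n x t) + Real.exp (θ2 n x t))
    (n : ℤ) (x t : ℝ) :
    deriv (fun x' => deriv (fun t' => Real.log (τ n x' t')) t) x =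
      -(1 / 4) * (p₁ - p₂) * (1 / p₁ - 1 / p₂) *
        (1 / (Real.cosh ((θ1 n x t - θ2 n x t) / 2)) ^ 2) := by
  simp only [hτ]
  rw [(stmt_3_general (hasDerivAt_phase_space (hθ1 n) x t) (hasDerivAt_phase_space (hθ2 n) x t)
    (hasDerivAt_phase_time (hθ1 n) · t) (hasDerivAt_phase_time (hθ2 n) · t)).deriv]
  ring
end

section
/- Let 0 < p_1 < p_2 < ⋯ < p_M and let 1 ≤ i < j ≤ M. Then at c = c_{i,j} one has η_i(c) = η_j(c); moreover η_l(c) > η_i(c) for every l with i < l < j, and η_l(c) < η_i(c) for every l with l < i or l > j. Consequently the level of intersection σ_{i,j} := #{ l ∈ {1,…,M} : η_l(c_{i,j}) < η_i(c_{i,j}) } equals (i−1) + (M−j); equivalently, σ_{i,j} = s if and only if j = M − s + i − 1. -/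
open scoped Classical

/-!
At `c = c_{i,j}` the function `x ↦ x * c + log x` takes the same value at `p i` and `p j`. Being
strictly concave, it lies strictly above that value between the two points and strictly below it
outside them. The values `η l c` are its samples at the increasing points `p l`, so the lines below
the crossing are exactly those with `l < i` or `j < l`.
-/

section StrictConcave

variable {𝕜 β : Type*} [Field 𝕜] [LinearOrder 𝕜] [IsStrictOrderedRing 𝕜]
  [AddCommMonoid β] [LinearOrder β] [IsOrderedAddMonoid β] [Module 𝕜 β] [PosSMulStrictMono 𝕜 β]
  {s : Set 𝕜} {f : 𝕜 → β} {x y z : 𝕜}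

theorem min_lt_of_strictConcaveOn_of_mem_Ioo (hf : StrictConcaveOn 𝕜 s f) (hx : x ∈ s)
    (hy : y ∈ s) (hz : z ∈ Set.Ioo x y) : min (f x) (f y) < f z := by
  have hxy : x < y := hz.1.trans hz.2
  exact hf.lt_on_openSegment hx hy hxy.ne (openSegment_eq_Ioo hxy ▸ hz)

theorem lt_of_strictConcaveOn_of_eq_of_mem_Ioo (hf : StrictConcaveOn 𝕜 s f) (hx : x ∈ s)
    (hy : y ∈ s) (hfxy : f x = f y) (hz : z ∈ Set.Ioo x y) : f x < f z := by
  simpa only [← hfxy, min_self] using min_lt_of_strictConcaveOn_of_mem_Ioo hf hx hy hz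

theorem lt_iff_lt_or_lt_of_strictConcaveOn_of_eq (hf : StrictConcaveOn 𝕜 s f) (hx : x ∈ s)
    (hy : y ∈ s) (hz : z ∈ s) (hxy : x < y) (hfxy : f x = f y) :
    f z < f x ↔ z < x ∨ y < z := by
  constructor
  · intro hlt
    by_contra! hmem
    rcases hmem.1.eq_or_lt with rfl | hxz
    · exact hlt.false
    rcases hmem.2.eq_or_lt with rfl | hzy
    · exact hlt.ne' hfxy
    · exact hlt.asymm (lt_of_strictConcaveOn_of_eq_of_mem_Ioo hf hx hy hfxy ⟨hxz, hzy⟩)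
  · rintro (hzx | hyz)
    · have hmin := min_lt_of_strictConcaveOn_of_mem_Ioo hf hz hy ⟨hzx, hxy⟩
      exact (min_lt_iff.1 hmin).resolve_right hfxy.not_gt
    · have hmin := min_lt_of_strictConcaveOn_of_mem_Ioo hf hx hz ⟨hxy, hyz⟩
      exact ((min_lt_iff.1 hmin).resolve_left hfxy.not_lt).trans_eq hfxy.symm

end StrictConcave

section AddLinear

variable {𝕜 : Type*} [Field 𝕜]

theorem mul_add_eq_mul_add_of_eq_neg_sub_div_sub {x y a b c : 𝕜} (hxy : x ≠ y)
    (hc : c = -(a - b) / (x - y)) : x * c + a = y * c + b := by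
  have hslope : c * (x - y) = -(a - b) := (eq_div_iff (sub_ne_zero.2 hxy)).1 hc
  linear_combination hslope

theorem strictConcaveOn_mul_const_add [LinearOrder 𝕜] [IsStrictOrderedRing 𝕜] {s : Set 𝕜}
    {g : 𝕜 → 𝕜} (hg : StrictConcaveOn 𝕜 s g) (c : 𝕜) :
    StrictConcaveOn 𝕜 s fun x => x * c + g x :=
  ((LinearMap.mulRight 𝕜 c).concaveOn hg.1).add_strictConcaveOn hg

end AddLinear

theorem card_filter_fin_lt_or_lt {M : ℕ} {i j : Fin M} (hij : i ≤ j) :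
    (Finset.univ.filter fun l => l < i ∨ j < l).card = (i : ℕ) + (M - 1 - (j : ℕ)) := by
  have hdisj : Disjoint (Finset.univ.filter (· < i)) (Finset.univ.filter (j < ·)) :=
    Finset.disjoint_filter.2 fun _ _ hli hjl => (hij.trans_lt hjl).asymm hli
  rw [Finset.filter_or, Finset.card_union_of_disjoint hdisj, Finset.filter_gt_eq_Iio,
    Finset.filter_lt_eq_Ioi, Fin.card_Iio, Fin.card_Ioi]

theorem stmt_6_general {𝕜 : Type*} [Field 𝕜] [LinearOrder 𝕜] [IsStrictOrderedRing 𝕜]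
    {t : Set 𝕜} {g : 𝕜 → 𝕜} (hg : StrictConcaveOn 𝕜 t g)
    (M : ℕ) (p : Fin M → 𝕜) (hp : ∀ j, p j ∈ t) (hpmono : StrictMono p)
    (i j : Fin M) (hij : i < j)
    (η : Fin M → 𝕜 → 𝕜) (hη : ∀ l c, η l c = p l * c + g (p l))
    (c : 𝕜) (hc : c = -(g (p i) - g (p j)) / (p i - p j)) :
    η i c = η j c ∧
    (∀ l : Fin M, i < l → l < j → η i c < η l c) ∧
    (∀ l : Fin M, l < i ∨ j < l → η l c < η i c) ∧
    (Finset.univ.filter (fun l : Fin M => η l c < η i c)).card = (i : ℕ) + (M - 1 - (j : ℕ)) ∧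
    (∀ s : ℕ, (Finset.univ.filter (fun l : Fin M => η l c < η i c)).card = s ↔
        (j : ℕ) + s + 1 = M + (i : ℕ)) := by
  have hconc := strictConcaveOn_mul_const_add hg c
  have heq : p i * c + g (p i) = p j * c + g (p j) :=
    mul_add_eq_mul_add_of_eq_neg_sub_div_sub (hpmono hij).ne hc
  have hbelow : ∀ l, η l c < η i c ↔ l < i ∨ j < l := fun l => by
    simpa only [hη, hpmono.lt_iff_lt] using
      lt_iff_lt_or_lt_of_strictConcaveOn_of_eq hconc (hp i) (hp j) (hp l) (hpmono hij) heq
  have hlevel : (Finset.univ.filter fun l => η l c < η i c).card = (i : ℕ) + (M - 1 - (j : ℕ)) := by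
    simpa only [hbelow] using card_filter_fin_lt_or_lt hij.le
  refine ⟨by simpa only [hη] using heq, fun l hil hlj => ?_, fun l => (hbelow l).2, hlevel,
    fun s => by omega⟩
  simpa only [hη] using
    lt_of_strictConcaveOn_of_eq_of_mem_Ioo hconc (hp i) (hp j) heq ⟨hpmono hil, hpmono hlj⟩

/-- at `c = c_{i,j}` one has `η_i(c) = η_j(c)`; the lines `η_l`
with `i < l < j` are above, all the others are below, and the level of
intersection `σ_{i,j}` equals `(i−1) + (M−j)` (in 1-based indexing);
equivalently `σ_{i,j} = s` iff `j = M − s + i − 1`.  Here indices are 0-based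
elements of `Fin M`, so the level is `i + (M − 1 − j)` and the equivalence
reads `j + s + 1 = M + i` (with 0-based `i`, `j`). -/
theorem stmt_6 (M : ℕ) (p : Fin M → ℝ) (hp : ∀ j, 0 < p j) (hpmono : StrictMono p)
    (i j : Fin M) (hij : i < j)
    (η : Fin M → ℝ → ℝ) (hη : ∀ l c, η l c = p l * c + Real.log (p l))
    (c : ℝ) (hc : c = -(Real.log (p i) - Real.log (p j)) / (p i - p j)) :
    η i c = η j c ∧
    (∀ l : Fin M, i < l → l < j → η i c < η l c) ∧
    (∀ l : Fin M, l < i ∨ j < l → η l c < η i c) ∧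
    (Finset.univ.filter (fun l : Fin M => η l c < η i c)).card = (i : ℕ) + (M - 1 - (j : ℕ)) ∧
    (∀ s : ℕ, (Finset.univ.filter (fun l : Fin M => η l c < η i c)).card = s ↔
        (j : ℕ) + s + 1 = M + (i : ℕ)) :=
  stmt_6_general strictConcaveOn_log_Ioi M p hp hpmono i j hij η hη c hc
end

section
/- Let 0 < p_1 < p_2 < ⋯ < p_M and 1 ≤ N ≤ M−1. (a) For each i with 1 ≤ i ≤ M−N, at c = c_{i,N+i} the two N-element index sets {i,…,N+i−1} and {i+1,…,N+i} satisfy Σ_{j=i}^{N+i−1} η_j(c) = Σ_{j=i+1}^{N+i} η_j(c), and for every N-element subset S of {1,…,M} distinct from both of these sets, Σ_{j∈S} η_j(c) < Σ_{j=i}^{N+i−1} η_j(c). (b) For each i with 1 ≤ i ≤ N, at c' = c_{i,M−N+i} the two N-element index sets {1,…,i−1} ∪ {M−N+i,…,M} and {1,…,i} ∪ {M−N+i+1,…,M} have equal sums Σ_{j∈S} η_j(c'), and every other N-element subset S of {1,…,M} has strictly larger sum Σ_{j∈S} η_j(c'). -/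
open scoped Classical

/-!
For a strictly concave `φ` (here `log`) the function `g x = x * c + φ x` is strictly concave, and
`c = c_{a,b}` is the slope for which `g (p a) = g (p b) = t`. Hence `η_l = g (p l)` exceeds `t` for
`a < l < b` and is below `t` for `l` outside `[a, b]`. To compare `S` with the window
`T = [a, b)` of the same size, compare `S \ T` and `T \ S` term by term with `t`: the sum over `S`
is smaller unless `S \ T ⊆ {b}` and `T \ S ⊆ {a}`, that is, unless `S` is `[a, b)` or `(a, b]`.
The minimisers are the complements of the maximising windows of size `M - N`.
-/

open Finset

section Exchange

variable {ι G : Type*} [DecidableEq ι] {S T : Finset ι} {a b : ι}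

theorem exists_mem_sdiff_ne_or_of_ne_insert_erase (hcard : #S = #T) (hST : S ≠ T)
    (hSwap : S ≠ insert b (T.erase a)) :
    (∃ l ∈ S \ T, l ≠ b) ∨ ∃ l ∈ T \ S, l ≠ a := by
  by_contra! hcon
  have hsdiff : #(S \ T) = #(T \ S) := card_sdiff_comm hcard
  have hne : (S \ T).Nonempty := sdiff_nonempty.2 fun h ↦ hST (eq_of_subset_of_card_le h hcard.ge)
  have hb : S \ T = {b} := hne.subset_singleton_iff.1 fun l hl ↦ mem_singleton.2 (hcon.1 l hl)
  have ha : T \ S = {a} := by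
    refine (card_pos.1 (hsdiff ▸ hne.card_pos)).subset_singleton_iff.1 fun l hl ↦ ?_
    exact mem_singleton.2 (hcon.2 l hl)
  apply hSwap
  rw [insert_eq, ← sdiff_singleton_eq_erase, ← ha, ← hb, sdiff_sdiff_right_self, inf_eq_inter,
    inter_comm, sdiff_union_inter]

theorem sum_lt_sum_of_card_eq_of_threshold [AddCommMonoid G] [PartialOrder G]
    [IsOrderedCancelAddMonoid G] {η : ι → G} {t : G} (hcard : #S = #T)
    (hS : ∀ l ∈ S \ T, η l ≤ t) (hT : ∀ l ∈ T \ S, t ≤ η l)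
    (hlt : (∃ l ∈ S \ T, η l < t) ∨ ∃ l ∈ T \ S, t < η l) :
    ∑ l ∈ S, η l < ∑ l ∈ T, η l := by
  have hconst : ∑ _l ∈ S \ T, t = ∑ _l ∈ T \ S, t := by
    rw [sum_const, sum_const, card_sdiff_comm hcard]
  rw [← sum_sdiff_lt_sum_sdiff]
  rcases hlt with hlt | hlt
  · exact ((sum_lt_sum hS hlt).trans_eq hconst).trans_le (sum_le_sum hT)
  · exact ((sum_le_sum hS).trans_eq hconst).trans_lt (sum_lt_sum hT hlt)

end Exchange

theorem sum_compl_lt_sum_compl_iff {ι G : Type*} [Fintype ι] [DecidableEq ι] [AddCommGroup G]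
    [PartialOrder G] [IsOrderedAddMonoid G] {S T : Finset ι} {η : ι → G} :
    ∑ l ∈ Sᶜ, η l < ∑ l ∈ Tᶜ, η l ↔ ∑ l ∈ T, η l < ∑ l ∈ S, η l := by
  rw [← sub_eq_of_eq_add (sum_compl_add_sum S η).symm,
    ← sub_eq_of_eq_add (sum_compl_add_sum T η).symm, sub_lt_sub_iff_left]

section Window

variable {ι G : Type*} [LinearOrder ι] [LocallyFiniteOrder ι] {a b : ι} {η : ι → G}

theorem sum_Ico_eq_sum_Ioc [AddCommMonoid G] (hη : η a = η b) :
    ∑ l ∈ Ico a b, η l = ∑ l ∈ Ioc a b, η l := by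
  rcases lt_or_ge a b with hab | hba
  · rw [← Ioo_insert_left hab, ← Ioo_insert_right hab, sum_insert left_notMem_Ioo,
      sum_insert right_notMem_Ioo, hη]
  · rw [Ico_eq_empty_of_le hba, Ioc_eq_empty_of_le hba]

theorem sum_lt_sum_Ico [AddCommMonoid G] [PartialOrder G] [IsOrderedCancelAddMonoid G]
    (hab : a < b) (hη : η a = η b) (hinside : ∀ l ∈ Ioo a b, η a < η l)
    (houtside : ∀ l ∉ Icc a b, η l < η a) {S : Finset ι} (hcard : #S = #(Ico a b))
    (hIco : S ≠ Ico a b) (hIoc : S ≠ Ioc a b) :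
    ∑ l ∈ S, η l < ∑ l ∈ Ico a b, η l := by
  have hS : ∀ l ∈ S \ Ico a b, l ≠ b → η l < η a := fun l hl hlb ↦ houtside l (by grind)
  have hT : ∀ l ∈ Ico a b \ S, l ≠ a → η a < η l := fun l hl hla ↦ hinside l (by grind)
  have hSwap : S ≠ insert b ((Ico a b).erase a) := by
    rwa [Ico_erase_left, Ioo_insert_right hab]
  refine sum_lt_sum_of_card_eq_of_threshold (t := η a) hcard (fun l hl ↦ ?_) (fun l hl ↦ ?_) ?_
  · rcases eq_or_ne l b with rfl | hlb
    exacts [hη.ge, (hS l hl hlb).le]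
  · rcases eq_or_ne l a with rfl | hla
    exacts [le_rfl, (hT l hl hla).le]
  · exact (exists_mem_sdiff_ne_or_of_ne_insert_erase hcard hIco hSwap).imp
      (fun ⟨l, hl, hlb⟩ ↦ ⟨l, hl, hS l hl hlb⟩) (fun ⟨l, hl, hla⟩ ↦ ⟨l, hl, hT l hl hla⟩)

end Window

theorem mul_neg_sub_div_sub_add_eq {𝕜 : Type*} [Field 𝕜] {x z : 𝕜} (hxz : x ≠ z) (u v : 𝕜) :
    x * (-(u - v) / (x - z)) + u = z * (-(u - v) / (x - z)) + v := by
  have : x - z ≠ 0 := sub_ne_zero.2 hxz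
  field_simp
  ring

section Concave

variable {𝕜 : Type*} [Field 𝕜] [LinearOrder 𝕜] [IsStrictOrderedRing 𝕜] {s : Set 𝕜} {g φ : 𝕜 → 𝕜}
  {x y z : 𝕜}

theorem strictConcaveOn_mul_const_add_s7 (hφ : StrictConcaveOn 𝕜 s φ) (c : 𝕜) :
    StrictConcaveOn 𝕜 s fun x ↦ x * c + φ x :=
  ((LinearMap.mulRight 𝕜 c).concaveOn hφ.1).add_strictConcaveOn hφ

theorem lt_of_strictConcaveOn_of_mem_Ioo (hg : StrictConcaveOn 𝕜 s g) (hx : x ∈ s) (hz : z ∈ s)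
    (hxz : g x = g z) (hy : y ∈ Set.Ioo x z) : g x < g y := by
  simpa [hxz] using hg.lt_on_openSegment hx hz (hy.1.trans hy.2).ne (Ioo_subset_openSegment hy)

theorem lt_of_strictConcaveOn_of_notMem_Icc (hg : StrictConcaveOn 𝕜 s g) (hx : x ∈ s) (hz : z ∈ s)
    (hxz : x < z) (hgxz : g x = g z) (hys : y ∈ s) (hy : y ∉ Set.Icc x z) : g y < g x := by
  rcases lt_or_ge y x with hyx | hxy
  · simpa [hgxz] using
      hg.lt_on_openSegment hys hz (hyx.trans hxz).ne (Ioo_subset_openSegment ⟨hyx, hxz⟩)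
  · have hzy : z < y := lt_of_not_ge fun h ↦ hy ⟨hxy, h⟩
    simpa [hgxz] using
      hg.lt_on_openSegment hx hys (hxz.trans hzy).ne (Ioo_subset_openSegment ⟨hxz, hzy⟩)

variable {ι : Type*} [LinearOrder ι] {p : ι → 𝕜} {a b : ι}

theorem sum_lt_sum_Ico_of_strictConcaveOn [LocallyFiniteOrder ι] (hg : StrictConcaveOn 𝕜 s g)
    (hps : ∀ l, p l ∈ s) (hp : StrictMono p) (hab : a < b) (hgab : g (p a) = g (p b))
    {S : Finset ι} (hcard : #S = #(Ico a b)) (hIco : S ≠ Ico a b) (hIoc : S ≠ Ioc a b) :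
    ∑ l ∈ S, g (p l) < ∑ l ∈ Ico a b, g (p l) := by
  refine sum_lt_sum_Ico hab hgab (fun l hl ↦ ?_) (fun l hl ↦ ?_) hcard hIco hIoc
  · rw [mem_Ioo] at hl
    exact lt_of_strictConcaveOn_of_mem_Ioo hg (hps a) (hps b) hgab ⟨hp hl.1, hp hl.2⟩
  · refine lt_of_strictConcaveOn_of_notMem_Icc hg (hps a) (hps b) (hp hab) hgab (hps l) ?_
    rwa [Set.mem_Icc, hp.le_iff_le, hp.le_iff_le, ← mem_Icc]

theorem sum_compl_Ico_lt_sum_of_strictConcaveOn [Fintype ι] [LocallyFiniteOrder ι]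
    (hg : StrictConcaveOn 𝕜 s g) (hps : ∀ l, p l ∈ s) (hp : StrictMono p) (hab : a < b)
    (hgab : g (p a) = g (p b)) {S : Finset ι} (hcard : #S = #(Ico a b)ᶜ)
    (hIco : S ≠ (Ico a b)ᶜ) (hIoc : S ≠ (Ioc a b)ᶜ) :
    ∑ l ∈ (Ico a b)ᶜ, g (p l) < ∑ l ∈ S, g (p l) := by
  have hcardCompl : #Sᶜ = #(Ico a b) := by rw [card_compl, hcard, ← card_compl, compl_compl]
  rw [← compl_compl S, sum_compl_lt_sum_compl_iff]
  exact sum_lt_sum_Ico_of_strictConcaveOn hg hps hp hab hgab hcardCompl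
    (fun h ↦ hIco (by rw [← h, compl_compl])) (fun h ↦ hIoc (by rw [← h, compl_compl]))

theorem stmt_7_general [Fintype ι] [LocallyFiniteOrder ι] (hφ : StrictConcaveOn 𝕜 s φ)
    (hps : ∀ l, p l ∈ s) (hp : StrictMono p) (hab : a < b) :
    let c : 𝕜 := -(φ (p a) - φ (p b)) / (p a - p b)
    let η : ι → 𝕜 := fun l ↦ p l * c + φ (p l)
    (∑ l ∈ Ico a b, η l = ∑ l ∈ Ioc a b, η l ∧
      ∀ S : Finset ι, #S = #(Ico a b) → S ≠ Ico a b → S ≠ Ioc a b →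
        ∑ l ∈ S, η l < ∑ l ∈ Ico a b, η l) ∧
    (∑ l ∈ (Ico a b)ᶜ, η l = ∑ l ∈ (Ioc a b)ᶜ, η l ∧
      ∀ S : Finset ι, #S = #(Ico a b)ᶜ → S ≠ (Ico a b)ᶜ → S ≠ (Ioc a b)ᶜ →
        ∑ l ∈ (Ico a b)ᶜ, η l < ∑ l ∈ S, η l) := by
  intro c η
  have hη : η a = η b := mul_neg_sub_div_sub_add_eq (hp hab).ne _ _
  have hsum : ∑ l ∈ Ico a b, η l = ∑ l ∈ Ioc a b, η l := sum_Ico_eq_sum_Ioc hη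
  have hg : StrictConcaveOn 𝕜 s fun x ↦ x * c + φ x := strictConcaveOn_mul_const_add_s7 hφ c
  refine ⟨⟨hsum, fun S ↦ sum_lt_sum_Ico_of_strictConcaveOn hg hps hp hab hη⟩, ?_,
    fun S ↦ sum_compl_Ico_lt_sum_of_strictConcaveOn hg hps hp hab hη⟩
  apply add_right_cancel (b := ∑ l ∈ Ico a b, η l)
  rw [sum_compl_add_sum, hsum, sum_compl_add_sum]

end Concave

/-- dominant-balance lemma for the lines `η_j(c) = p_j·c + log p_j`.
(a) At `c = c_{i,N+i}` the two consecutive `N`-element index windows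
`{i,…,N+i−1}` and `{i+1,…,N+i}` have equal `η`-sums and strictly dominate the
`η`-sum of every other `N`-element index set.
(b) At `c' = c_{i,M−N+i}` the two index sets `{1,…,i−1} ∪ {M−N+i,…,M}` and
`{1,…,i} ∪ {M−N+i+1,…,M}` have equal `η`-sums and every other `N`-element index
set has strictly larger `η`-sum.  (Indices here are 0-based.) -/
theorem stmt_7 (M N : ℕ) (hM : 1 ≤ M) (hN : 1 ≤ N) (hNM : N ≤ M - 1)
    (p : Fin M → ℝ) (hp : ∀ j, 0 < p j) (hpmono : StrictMono p) :
    (∀ (i : ℕ) (hi : i + N < M),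
      let a : Fin M := ⟨i, by omega⟩
      let b : Fin M := ⟨i + N, hi⟩
      let c : ℝ := -(Real.log (p a) - Real.log (p b)) / (p a - p b)
      let η : Fin M → ℝ := fun l => p l * c + Real.log (p l)
      let S₁ : Finset (Fin M) :=
        Finset.univ.filter (fun l : Fin M => i ≤ (l : ℕ) ∧ (l : ℕ) < i + N)
      let S₂ : Finset (Fin M) :=
        Finset.univ.filter (fun l : Fin M => i + 1 ≤ (l : ℕ) ∧ (l : ℕ) < i + N + 1)
      (∑ l ∈ S₁, η l) = (∑ l ∈ S₂, η l) ∧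
      ∀ S : Finset (Fin M), S.card = N → S ≠ S₁ → S ≠ S₂ →
        (∑ l ∈ S, η l) < ∑ l ∈ S₁, η l) ∧
    (∀ (i : ℕ) (hi : i < N),
      let a : Fin M := ⟨i, by omega⟩
      let b : Fin M := ⟨M - N + i, by omega⟩
      let c : ℝ := -(Real.log (p a) - Real.log (p b)) / (p a - p b)
      let η : Fin M → ℝ := fun l => p l * c + Real.log (p l)
      let T₁ : Finset (Fin M) :=
        Finset.univ.filter (fun l : Fin M => (l : ℕ) < i ∨ M - N + i ≤ (l : ℕ))
      let T₂ : Finset (Fin M) :=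
        Finset.univ.filter (fun l : Fin M => (l : ℕ) < i + 1 ∨ M - N + i + 1 ≤ (l : ℕ))
      (∑ l ∈ T₁, η l) = (∑ l ∈ T₂, η l) ∧
      ∀ S : Finset (Fin M), S.card = N → S ≠ T₁ → S ≠ T₂ →
        (∑ l ∈ T₁, η l) < ∑ l ∈ S, η l) := by
  refine ⟨fun i hi ↦ ?_, fun i hi ↦ ?_⟩
  · intro a b c η S₁ S₂
    have hab : a < b := Fin.mk_lt_mk.2 (by omega)
    have hS₁ : S₁ = Ico a b := by ext l; simp [S₁, a, b, Fin.le_def, Fin.lt_def]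
    have hS₂ : S₂ = Ioc a b := by ext l; simp [S₂, a, b, Fin.le_def, Fin.lt_def]
    have hcard : #(Ico a b) = N := by simp [a, b]
    simpa only [hS₁, hS₂, hcard] using
      (stmt_7_general strictConcaveOn_log_Ioi hp hpmono hab).1
  · intro a b c η T₁ T₂
    have hab : a < b := Fin.mk_lt_mk.2 (by omega)
    have hT₁ : T₁ = (Ico a b)ᶜ := by
      ext l; simp [T₁, a, b, Fin.le_def, Fin.lt_def, imp_iff_not_or]
    have hT₂ : T₂ = (Ioc a b)ᶜ := by
      ext l; simp [T₂, a, b, Fin.le_def, Fin.lt_def, imp_iff_not_or]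
    have hcard : #(Ico a b)ᶜ = N := by
      simp only [card_compl, Fintype.card_fin, Fin.card_Ico, a, b]
      omega
    simpa only [hT₁, hT₂, hcard] using
      (stmt_7_general strictConcaveOn_log_Ioi hp hpmono hab).2
end

section
/- Let 1 ≤ N ≤ M−1. For each i with 1 ≤ i ≤ M−N: (a) for every ξ ∈ ℝ the limit W_i(ξ) := lim_{n→+∞, n∈ℤ} w_n( c_{i,N+i}·n + ξ ) exists; (b) lim_{ξ→+∞} W_i(ξ) = Σ_{j=i+1}^{N+i} p_j and lim_{ξ→−∞} W_i(ξ) = Σ_{j=i}^{N+i−1} p_j. -/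
open scoped Classical

/-!
`∂ₓ log τ_n` is the mean of the numbers `∑_{j ∈ S} p_j` over the `N`-subsets `S`, weighted by the
terms of `τ_n`. Along `x = c n + ξ` the weight of `S` grows like `exp (n ∑_{j ∈ S} ℓ_j)` with
`ℓ_j = log p_j + c p_j`, so in the limit only the subsets maximising `∑_{j ∈ S} ℓ_j` survive.
For `c = c_{i,N+i}` the values `ℓ_i` and `ℓ_{N+i}` agree; by strict concavity of `log`, `ℓ` exceeds
this common value strictly between the two indices and is smaller outside. Hence the maximisers are
exactly `{i, …, N+i-1}` and `{i+1, …, N+i}`, and `W_i(ξ)` is a mean of their two sums, with weights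
proportional to `exp (ξ ∑_{j ∈ S} p_j)`: the larger sum wins as `ξ → +∞`, the smaller as `ξ → -∞`.
-/

section ExponentialWeights

open Finset Filter Topology

variable {I X V : Type*} [AddCommGroup V] [Module ℝ V] {s : Finset I} {l : Filter X}

lemma tendsto_centerMass [TopologicalSpace V] [ContinuousAdd V] [ContinuousSMul ℝ V]
    {w : X → I → ℝ} {w₀ : I → ℝ} (z : I → V)
    (hw : ∀ k ∈ s, Tendsto (fun x => w x k) l (𝓝 (w₀ k))) (hw₀ : ∑ k ∈ s, w₀ k ≠ 0) :
    Tendsto (fun x => s.centerMass (w x) z) l (𝓝 (s.centerMass w₀ z)) :=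
  ((tendsto_finsetSum s hw).inv₀ hw₀).smul
    (tendsto_finsetSum s fun k hk => (hw k hk).smul_const (z k))

lemma centerMass_mul_exp_add_const (a e : I → ℝ) (C : ℝ) (z : I → V) :
    s.centerMass (fun k => a k * Real.exp (e k + C)) z =
      s.centerMass (fun k => a k * Real.exp (e k)) z := by
  rw [← centerMass_smul_left (w := fun k => a k * Real.exp (e k)) (hc := (Real.exp_pos C).ne')]
  refine centerMass_congr_weights fun k _ => ?_
  rw [Pi.smul_apply, smul_eq_mul, Real.exp_add]
  ring

lemma centerMass_filter_eq_centerMass_ite (q : I → Prop) [DecidablePred q] (a : I → ℝ) (z : I → V) :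
    (s.filter q).centerMass a z = s.centerMass (fun k => if q k then a k else 0) z := by
  rw [← centerMass_subset z (filter_subset q s) fun k hk hkq =>
    if_neg fun hqk => hkq (mem_filter.2 ⟨hk, hqk⟩)]
  exact centerMass_congr_weights fun k hk => (if_pos (mem_filter.1 hk).2).symm

lemma tendsto_mul_exp_mul_of_nonpos {u : X → ℝ} (hu : Tendsto u l atTop) (a : ℝ) {d : ℝ}
    (hd : d ≤ 0) :
    Tendsto (fun x => a * Real.exp (u x * d)) l (𝓝 (if d = 0 then a else 0)) := by
  rcases hd.eq_or_lt with rfl | hneg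
  · simpa using tendsto_const_nhds
  · rw [if_neg hneg.ne]
    simpa using (Real.tendsto_exp_atBot.comp (hu.atTop_mul_const_of_neg hneg)).const_mul a

theorem tendsto_centerMass_mul_exp [TopologicalSpace V] [ContinuousAdd V] [ContinuousSMul ℝ V]
    {u : X → ℝ} (hu : Tendsto u l atTop) {a d : I → ℝ} (ha : ∀ k ∈ s, 0 < a k) {m : I}
    (hm : m ∈ s) (hmax : ∀ k ∈ s, d k ≤ d m) (z : I → V) :
    Tendsto (fun x => s.centerMass (fun k => a k * Real.exp (u x * d k)) z) l
      (𝓝 ((s.filter (d · = d m)).centerMass a z)) := by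
  have normalize : ∀ x, s.centerMass (fun k => a k * Real.exp (u x * (d k - d m))) z =
      s.centerMass (fun k => a k * Real.exp (u x * d k)) z := fun x => by
    simpa only [mul_add, mul_neg, sub_eq_add_neg] using
      centerMass_mul_exp_add_const a (fun k => u x * d k) (-(u x * d m)) z
  have sum_limit_pos : 0 < ∑ k ∈ s, if d k = d m then a k else 0 := by
    rw [← sum_filter]
    exact sum_pos (fun k hk => ha k (mem_filter.1 hk).1) ⟨m, mem_filter.2 ⟨hm, rfl⟩⟩
  rw [centerMass_filter_eq_centerMass_ite]
  refine (tendsto_centerMass z (fun k hk => ?_) sum_limit_pos.ne').congr normalize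
  simpa only [sub_eq_zero] using
    tendsto_mul_exp_mul_of_nonpos hu (a k) (sub_nonpos.2 (hmax k hk))

lemma tendsto_centerMass_mul_exp_of_eq_on_maximizers [TopologicalSpace V] [ContinuousAdd V]
    [ContinuousSMul ℝ V] {u : X → ℝ} (hu : Tendsto u l atTop) {a d : I → ℝ}
    (ha : ∀ k ∈ s, 0 < a k) {m : I} (hm : m ∈ s) (hmax : ∀ k ∈ s, d k ≤ d m) {z : I → V}
    (hz : ∀ k ∈ s, d k = d m → z k = z m) :
    Tendsto (fun x => s.centerMass (fun k => a k * Real.exp (u x * d k)) z) l (𝓝 (z m)) := by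
  have sum_pos : 0 < ∑ k ∈ s.filter (d · = d m), a k :=
    sum_pos (fun k hk => ha k (mem_filter.1 hk).1) ⟨m, mem_filter.2 ⟨hm, rfl⟩⟩
  have limit_eq : (s.filter (d · = d m)).centerMass a z = z m := by
    rw [centerMass_congr_fun fun k hk _ => hz k (mem_filter.1 hk).1 (mem_filter.1 hk).2]
    exact centerMass_const sum_pos.ne' (z m)
  exact limit_eq ▸ tendsto_centerMass_mul_exp hu ha hm hmax z

lemma deriv_log_sum_mul_exp {a P : I → ℝ} (hs : s.Nonempty) (ha : ∀ k ∈ s, 0 < a k) (x : ℝ) :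
    deriv (fun y => Real.log (∑ k ∈ s, a k * Real.exp (P k * y))) x =
      s.centerMass (fun k => a k * Real.exp (P k * x)) P := by
  have sum_pos : 0 < ∑ k ∈ s, a k * Real.exp (P k * x) :=
    sum_pos (fun k hk => mul_pos (ha k hk) (Real.exp_pos _)) hs
  have hasDerivAt_sum : HasDerivAt (fun y => ∑ k ∈ s, a k * Real.exp (P k * y))
      (∑ k ∈ s, a k * Real.exp (P k * x) * P k) x :=
    HasDerivAt.fun_sum fun k _ => by
      simpa [mul_assoc] using (((hasDerivAt_id x).const_mul (P k)).exp.const_mul (a k))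
  rw [(hasDerivAt_sum.log sum_pos.ne').deriv, div_eq_inv_mul]
  rfl

lemma tendsto_deriv_log_sum_mul_exp_line {a L P : I → ℝ} (ha : ∀ k ∈ s, 0 < a k) {c : ℝ} {m : I}
    (hm : m ∈ s) (hmax : ∀ k ∈ s, L k + c * P k ≤ L m + c * P m) (ξ : ℝ) :
    Tendsto (fun r : ℝ =>
        deriv (fun y => Real.log (∑ k ∈ s, a k * Real.exp (r * L k + P k * y))) (c * r + ξ)) atTop
      (𝓝 ((s.filter fun k => L k + c * P k = L m + c * P m).centerMass
        (fun k => a k * Real.exp (ξ * P k)) P)) := by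
  have deriv_eq : ∀ r : ℝ,
      s.centerMass (fun k => a k * Real.exp (ξ * P k) * Real.exp (r * (L k + c * P k))) P =
        deriv (fun y => Real.log (∑ k ∈ s, a k * Real.exp (r * L k + P k * y))) (c * r + ξ) := by
    intro r
    simp only [Real.exp_add (r * L _), ← mul_assoc]
    rw [deriv_log_sum_mul_exp ⟨m, hm⟩ fun k hk => mul_pos (ha k hk) (Real.exp_pos _)]
    refine centerMass_congr_weights fun k _ => ?_
    simp only [mul_assoc, ← Real.exp_add]
    ring_nf
  exact (tendsto_centerMass_mul_exp tendsto_id (fun k hk => mul_pos (ha k hk) (Real.exp_pos _))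
    hm hmax P).congr deriv_eq

theorem exists_tendsto_deriv_log_sum_mul_exp_line {a L P : I → ℝ} (ha : ∀ k ∈ s, 0 < a k)
    {c : ℝ} {α β : I} (hα : α ∈ s) (hβ : β ∈ s) (hαβ : L β + c * P β = L α + c * P α)
    (hmax : ∀ k ∈ s, L k + c * P k ≤ L α + c * P α)
    (hP : ∀ k ∈ s, L k + c * P k = L α + c * P α → P k ∈ Set.Icc (P α) (P β)) :
    ∃ W : ℝ → ℝ,
      (∀ ξ, Tendsto (fun r : ℝ =>
        deriv (fun y => Real.log (∑ k ∈ s, a k * Real.exp (r * L k + P k * y))) (c * r + ξ))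
        atTop (𝓝 (W ξ))) ∧
      Tendsto W atTop (𝓝 (P β)) ∧ Tendsto W atBot (𝓝 (P α)) := by
  set F := s.filter fun k => L k + c * P k = L α + c * P α
  have ha_F : ∀ k ∈ F, 0 < a k := fun k hk => ha k (mem_filter.1 hk).1
  have hP_F : ∀ k ∈ F, P k ∈ Set.Icc (P α) (P β) := fun k hk =>
    hP k (mem_filter.1 hk).1 (mem_filter.1 hk).2
  refine ⟨fun ξ => F.centerMass (fun k => a k * Real.exp (ξ * P k)) P,
    tendsto_deriv_log_sum_mul_exp_line ha hα hmax, ?_, ?_⟩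
  · exact tendsto_centerMass_mul_exp_of_eq_on_maximizers tendsto_id ha_F (mem_filter.2 ⟨hβ, hαβ⟩)
      (fun k hk => (hP_F k hk).2) fun _ _ => id
  · simpa using tendsto_centerMass_mul_exp_of_eq_on_maximizers (d := fun k => -P k)
      tendsto_neg_atBot_atTop ha_F (mem_filter.2 ⟨hα, rfl⟩)
      (fun k hk => neg_le_neg (hP_F k hk).1) fun _ _ => neg_inj.1

end ExponentialWeights

section Concavity

variable {𝕜 : Type*} [Field 𝕜] [LinearOrder 𝕜] [IsStrictOrderedRing 𝕜] {D : Set 𝕜} {h : 𝕜 → 𝕜}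
  {x y z : 𝕜}

lemma left_lt_of_strictConcaveOn_of_mem_Ioo (hh : StrictConcaveOn 𝕜 D h) (hx : x ∈ D)
    (hy : y ∈ D) (hxy : h x = h y) (hz : z ∈ Set.Ioo x y) : h x < h z := by
  have hlt : x < y := hz.1.trans hz.2
  simpa [hxy] using hh.lt_on_openSegment hx hy hlt.ne (openSegment_eq_Ioo hlt ▸ hz)

lemma lt_left_of_strictConcaveOn_of_notMem_Icc (hh : StrictConcaveOn 𝕜 D h) (hx : x ∈ D)
    (hy : y ∈ D) (hz : z ∈ D) (hlt : x < y) (hxy : h x = h y)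
    (hzxy : z ∉ Set.Icc x y) : h z < h x := by
  rcases lt_or_ge z x with hzx | hxz
  · have hx_seg : x ∈ openSegment 𝕜 z y := by
      rw [openSegment_eq_Ioo (hzx.trans hlt)]
      exact ⟨hzx, hlt⟩
    simpa [hxy] using hh.lt_on_openSegment hz hy (hzx.trans hlt).ne hx_seg
  · have hyz : y < z := lt_of_not_ge fun hzy => hzxy ⟨hxz, hzy⟩
    have hy_seg : y ∈ openSegment 𝕜 x z := by
      rw [openSegment_eq_Ioo (hlt.trans hyz)]
      exact ⟨hlt, hyz⟩
    simpa [hxy] using hh.lt_on_openSegment hx hz (hlt.trans hyz).ne hy_seg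

lemma add_neg_slope_mul_eq {K : Type*} [Field K] {x y : K} (hxy : x ≠ y) (a b : K) :
    a + -(a - b) / (x - y) * x = b + -(a - b) / (x - y) * y := by
  have := sub_ne_zero.2 hxy
  field_simp
  ring

end Concavity

section Intervals

open Finset

variable {J : Type*} [LinearOrder J] [LocallyFiniteOrder J] {u v : J}

lemma card_Ioc_eq_card_Ico (u v : J) : #(Ioc u v) = #(Ico u v) := by
  rw [card_Ioc_eq_card_Icc_sub_one, card_Ico_eq_card_Icc_sub_one]

lemma eq_Ico_or_eq_Ioc_of_card_eq (huv : u < v) {S : Finset J} (hcard : #S = #(Ico u v))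
    (hIoo : Ioo u v ⊆ S) (hIcc : S ⊆ Icc u v) : S = Ico u v ∨ S = Ioc u v := by
  by_cases hu : u ∈ S
  · left
    have hIco : Ico u v ⊆ S := Ioo_insert_left huv ▸ insert_subset hu hIoo
    exact (eq_of_subset_of_card_le hIco hcard.le).symm
  · right
    have hIoc : S ⊆ Ioc u v := by
      rw [← Icc_erase_left]
      exact subset_erase.2 ⟨hIcc, hu⟩
    exact eq_of_subset_of_card_le hIoc (card_Ioc_eq_card_Ico u v ▸ hcard.ge)

lemma sum_Ioc_eq_sum_Ico_of_eq {R : Type*} [AddCommMonoid R] {f : J → R} (huv : u < v)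
    (hfuv : f u = f v) : ∑ j ∈ Ioc u v, f j = ∑ j ∈ Ico u v, f j := by
  rw [← add_sum_Ioo_eq_sum_Ico huv, ← add_sum_Ioo_eq_sum_Ioc huv, hfuv]

lemma apply_left_le_of_mem_Ico {R : Type*} [Preorder R] {f : J → R}
    (hIoo : ∀ j ∈ Ioo u v, f u < f j) {j : J} (hj : j ∈ Ico u v) : f u ≤ f j := by
  obtain ⟨huj, hjv⟩ := mem_Ico.1 hj
  rcases huj.eq_or_lt with rfl | huj
  · rfl
  · exact (hIoo j (mem_Ioo.2 ⟨huj, hjv⟩)).le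

lemma apply_le_left_of_notMem_Ico {R : Type*} [Preorder R] {f : J → R} (hfuv : f u = f v)
    (hIcc : ∀ j ∉ Icc u v, f j < f u) {j : J} (hj : j ∉ Ico u v) : f j ≤ f u := by
  by_cases hj' : j ∈ Icc u v
  · have hjv : j = v := by
      rw [mem_Icc] at hj'
      exact hj'.2.eq_of_not_lt fun hlt => hj (mem_Ico.2 ⟨hj'.1, hlt⟩)
    rw [hjv, hfuv]
  · exact (hIcc j hj').le

end Intervals

section SubsetSums

open Finset

variable {J R : Type*} [AddCommGroup R]

lemma sum_sub_sum_eq_sum_sdiff_of_card_eq [DecidableEq J] {S T : Finset J} (hcard : #S = #T)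
    (f : J → R) (b : R) :
    ∑ j ∈ T, f j - ∑ j ∈ S, f j = ∑ j ∈ T \ S, (f j - b) + ∑ j ∈ S \ T, (b - f j) := by
  simp only [← sum_sdiff_sub_sum_sdiff (s₁ := S) (s₂ := T), sum_sub_distrib, sum_const,
    card_sdiff_comm hcard]
  abel

variable [PartialOrder R] [IsOrderedAddMonoid R] {f : J → R} {b : R}

lemma sum_le_sum_of_threshold {S T : Finset J} (hcard : #S = #T) (hT : ∀ j ∈ T, b ≤ f j)
    (hTc : ∀ j ∉ T, f j ≤ b) : ∑ j ∈ S, f j ≤ ∑ j ∈ T, f j := by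
  rw [← sub_nonneg, sum_sub_sum_eq_sum_sdiff_of_card_eq hcard f b]
  exact add_nonneg (sum_nonneg fun j hj => sub_nonneg.2 (hT j (mem_sdiff.1 hj).1))
    (sum_nonneg fun j hj => sub_nonneg.2 (hTc j (mem_sdiff.1 hj).2))

lemma eq_threshold_of_sum_eq {S T : Finset J} (hcard : #S = #T)
    (hT : ∀ j ∈ T, b ≤ f j) (hTc : ∀ j ∉ T, f j ≤ b) (hsum : ∑ j ∈ S, f j = ∑ j ∈ T, f j) :
    (∀ j ∈ T, j ∉ S → f j = b) ∧ ∀ j ∈ S, j ∉ T → f j = b := by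
  have inside : ∀ j ∈ T \ S, 0 ≤ f j - b := fun j hj => sub_nonneg.2 (hT j (mem_sdiff.1 hj).1)
  have outside : ∀ j ∈ S \ T, 0 ≤ b - f j := fun j hj => sub_nonneg.2 (hTc j (mem_sdiff.1 hj).2)
  obtain ⟨inside_zero, outside_zero⟩ :=
    (add_eq_zero_iff_of_nonneg (sum_nonneg inside) (sum_nonneg outside)).1
      (by rw [← sum_sub_sum_eq_sum_sdiff_of_card_eq hcard f b, hsum, sub_self])
  rw [sum_eq_zero_iff_of_nonneg inside] at inside_zero
  rw [sum_eq_zero_iff_of_nonneg outside] at outside_zero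
  exact ⟨fun j hjT hjS => sub_eq_zero.1 (inside_zero j (mem_sdiff.2 ⟨hjT, hjS⟩)),
    fun j hjS hjT => (sub_eq_zero.1 (outside_zero j (mem_sdiff.2 ⟨hjS, hjT⟩))).symm⟩

variable [LinearOrder J] [LocallyFiniteOrder J] {u v : J}

lemma sum_Ico_le_sum_Ioc (huv : u < v) (hfuv : f u ≤ f v) :
    ∑ j ∈ Ico u v, f j ≤ ∑ j ∈ Ioc u v, f j := by
  rw [← add_sum_Ioo_eq_sum_Ico huv, ← add_sum_Ioo_eq_sum_Ioc huv]
  gcongr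

lemma sum_le_sum_Ico (hfuv : f u = f v) (hIoo : ∀ j ∈ Ioo u v, f u < f j)
    (hIcc : ∀ j ∉ Icc u v, f j < f u) {S : Finset J} (hcard : #S = #(Ico u v)) :
    ∑ j ∈ S, f j ≤ ∑ j ∈ Ico u v, f j :=
  sum_le_sum_of_threshold hcard (fun _ => apply_left_le_of_mem_Ico hIoo)
    fun _ => apply_le_left_of_notMem_Ico hfuv hIcc

lemma eq_Ico_or_eq_Ioc_of_sum_eq (huv : u < v) (hfuv : f u = f v)
    (hIoo : ∀ j ∈ Ioo u v, f u < f j) (hIcc : ∀ j ∉ Icc u v, f j < f u) {S : Finset J}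
    (hcard : #S = #(Ico u v)) (hsum : ∑ j ∈ S, f j = ∑ j ∈ Ico u v, f j) :
    S = Ico u v ∨ S = Ioc u v := by
  obtain ⟨missing, extra⟩ := eq_threshold_of_sum_eq hcard (fun _ => apply_left_le_of_mem_Ico hIoo)
    (fun _ => apply_le_left_of_notMem_Ico hfuv hIcc) hsum
  refine eq_Ico_or_eq_Ioc_of_card_eq huv hcard (fun j hj => ?_) fun j hjS => ?_
  · by_contra hjS
    exact (hIoo j hj).ne' (missing j (Ioo_subset_Ico_self hj) hjS)
  · by_contra hj
    exact (hIcc j hj).ne (extra j hjS fun hj' => hj (Ico_subset_Icc_self hj'))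

end SubsetSums

section Vandermonde

open Finset

variable {J : Type*} [LinearOrder J]

/-- The coefficient `Δ` of the τ-function, the product of `(p i - p j) ^ 2` over the pairs `i < j`
in `S`, as a function of the subset `S` rather than of its increasing enumeration. -/
noncomputable def sqVandermonde (p : J → ℝ) (S : Finset J) : ℝ :=
  ∏ i ∈ S, ∏ j ∈ S, if i < j then (p i - p j) ^ 2 else 1

lemma sqVandermonde_pos {p : J → ℝ} (hp : Function.Injective p) (S : Finset J) :
    0 < sqVandermonde p S := by
  refine prod_pos fun i _ => prod_pos fun j _ => ?_
  split_ifs with hij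
  · exact sq_pos_of_ne_zero (sub_ne_zero.2 (hp.ne hij.ne))
  · exact one_pos

lemma sqVandermonde_image (p : J → ℝ) {N : ℕ} {ι : Fin N → J} (hι : StrictMono ι) :
    sqVandermonde p (univ.image ι) =
      ∏ a, ∏ b, if a < b then (p (ι a) - p (ι b)) ^ 2 else 1 := by
  simp only [sqVandermonde, prod_image hι.injective.injOn, hι.lt_iff_lt]

end Vandermonde

section Tau

open Finset Filter Topology

variable {J : Type*} [Fintype J]

/-- A τ-function as an exponential sum over the `N`-element subsets `S` of the index type, with
arbitrary coefficients `A S`. The sequence `q` takes the place of `log p`, and the lattice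
variable `r` (the `n` of `τ_n`) is allowed to be real. -/
noncomputable def subsetTau (A : Finset J → ℝ) (q p : J → ℝ) (N : ℕ) (r x : ℝ) : ℝ :=
  ∑ S ∈ powersetCard N univ, A S * Real.exp (r * ∑ j ∈ S, q j + (∑ j ∈ S, p j) * x)

theorem exists_tendsto_deriv_log_subsetTau [LinearOrder J] [LocallyFiniteOrder J] {D : Set ℝ}
    {g : ℝ → ℝ} (hg : StrictConcaveOn ℝ D g) {p : J → ℝ} (hpD : ∀ j, p j ∈ D) (hp : StrictMono p)
    {A : Finset J → ℝ} (hA : ∀ S, 0 < A S) {u v : J} (huv : u < v) {N : ℕ} (hN : #(Ico u v) = N)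
    {c : ℝ} (hc : g (p u) + c * p u = g (p v) + c * p v) :
    ∃ W : ℝ → ℝ,
      (∀ ξ, Tendsto (fun r => deriv
        (fun y => Real.log (subsetTau A (g ∘ p) p N r y)) (c * r + ξ)) atTop (𝓝 (W ξ))) ∧
      Tendsto W atTop (𝓝 (∑ j ∈ Ioc u v, p j)) ∧ Tendsto W atBot (𝓝 (∑ j ∈ Ico u v, p j)) := by
  subst hN
  set f : J → ℝ := fun j => g (p j) + c * p j
  have sum_f : ∀ S : Finset J, ∑ j ∈ S, (g ∘ p) j + c * ∑ j ∈ S, p j = ∑ j ∈ S, f j := fun S => by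
    rw [mul_sum, ← sum_add_distrib]
    rfl
  have f_concave : StrictConcaveOn ℝ D fun x => g x + c * x :=
    hg.add_concaveOn ((LinearMap.mul ℝ ℝ c).concaveOn hg.1)
  have f_Ioo : ∀ j ∈ Ioo u v, f u < f j := fun j hj =>
    left_lt_of_strictConcaveOn_of_mem_Ioo f_concave (hpD u) (hpD v) hc
      ⟨hp (mem_Ioo.1 hj).1, hp (mem_Ioo.1 hj).2⟩
  have f_Icc : ∀ j ∉ Icc u v, f j < f u := fun j hj =>
    lt_left_of_strictConcaveOn_of_notMem_Icc f_concave (hpD u) (hpD v) (hpD j) (hp huv) hc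
      fun hpj => hj (mem_Icc.2 ⟨hp.le_iff_le.1 hpj.1, hp.le_iff_le.1 hpj.2⟩)
  have sum_p_le : ∑ j ∈ Ico u v, p j ≤ ∑ j ∈ Ioc u v, p j := sum_Ico_le_sum_Ioc huv (hp huv).le
  refine exists_tendsto_deriv_log_sum_mul_exp_line (fun S _ => hA S)
    (mem_powersetCard_univ.2 rfl) (mem_powersetCard_univ.2 (card_Ioc_eq_card_Ico u v))
    ?_ (fun S hS => ?_) fun S hS hsum => ?_
  · simpa only [sum_f] using sum_Ioc_eq_sum_Ico_of_eq huv hc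
  · simpa only [sum_f] using sum_le_sum_Ico hc f_Ioo f_Icc (mem_powersetCard_univ.1 hS)
  · simp only [sum_f] at hsum
    rcases eq_Ico_or_eq_Ioc_of_sum_eq huv hc f_Ioo f_Icc (mem_powersetCard_univ.1 hS) hsum
      with rfl | rfl
    · exact ⟨le_rfl, sum_p_le⟩
    · exact ⟨sum_p_le, le_rfl⟩

variable [LinearOrder J]

lemma sum_strictMono_eq_sum_powersetCard {R : Type*} [AddCommMonoid R] (N : ℕ)
    (F : Finset J → R) :
    ∑ ι : Fin N → J with StrictMono ι, F (univ.image ι) = ∑ S ∈ powersetCard N univ, F S := by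
  refine sum_nbij (univ.image ·) (fun ι hι => ?_) (fun ι hι κ hκ h => ?_) (fun S hS => ?_)
    fun _ _ => rfl
  · have hι : StrictMono ι := (mem_filter.1 hι).2
    rw [mem_powersetCard_univ, card_image_of_injective _ hι.injective, card_fin]
  · have hι : StrictMono ι := (mem_filter.1 hι).2
    have hκ : StrictMono κ := (mem_filter.1 hκ).2
    exact (hι.range_inj hκ).1 (by simpa using congrArg ((↑) : Finset J → Set J) h)
  · have hS : #S = N := mem_powersetCard_univ.1 hS
    exact ⟨S.orderEmbOfFin hS, by simpa using (S.orderEmbOfFin hS).strictMono,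
      image_orderEmbOfFin_univ S hS⟩

lemma sum_strictMono_eq_subsetTau (p q κ : J → ℝ) (N : ℕ) (r x : ℝ) :
    (∑ ι : Fin N → J, if StrictMono ι then
        (∏ a, ∏ b, if a < b then (p (ι a) - p (ι b)) ^ 2 else 1) *
          Real.exp (∑ a, (r * q (ι a) + p (ι a) * x + κ (ι a))) else 0) =
      subsetTau (fun S => sqVandermonde p S * Real.exp (∑ j ∈ S, κ j)) q p N r x := by
  rw [subsetTau, ← sum_strictMono_eq_sum_powersetCard, ← sum_filter]
  refine sum_congr rfl fun ι hι => ?_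
  have hι : StrictMono ι := (mem_filter.1 hι).2
  simp only [sqVandermonde_image p hι, sum_image hι.injective.injOn, mul_assoc, ← Real.exp_add,
    sum_add_distrib, mul_sum, sum_mul]
  congr 2
  ring

end Tau

/-- asymptotics of `w_n(x) = ∂/∂x log τ_n^{(N)}(x)` as `n → +∞`
along the line `x = c_{i,N+i}·n + ξ`: the limit `W_i(ξ)` exists for every
`ξ ∈ ℝ`, and `W_i(ξ) → Σ_{j=i+1}^{N+i} p_j` as `ξ → +∞`,
`W_i(ξ) → Σ_{j=i}^{N+i−1} p_j` as `ξ → −∞`.  (Indices are 0-based.) -/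
theorem stmt_8 (M N : ℕ) (hM : 1 ≤ M) (hN : 1 ≤ N) (hNM : N ≤ M - 1)
    (p : Fin M → ℝ) (hp : ∀ j, 0 < p j) (hpmono : StrictMono p)
    (θ0 : Fin M → ℝ) (t : ℝ)
    (i : ℕ) (hi : i + N < M) :
    let θ : Fin M → ℤ → ℝ → ℝ := fun j n x =>
      (n : ℝ) * Real.log (p j) + p j * x - t / p j + θ0 j
    let τ : ℤ → ℝ → ℝ := fun n x =>
      ∑ ι : Fin N → Fin M,
        if StrictMono ι then
          (∏ a : Fin N, ∏ b : Fin N, if a < b then (p (ι a) - p (ι b)) ^ 2 else 1) *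
            Real.exp (∑ j, θ (ι j) n x)
        else 0
    let w : ℤ → ℝ → ℝ := fun n x => deriv (fun y => Real.log (τ n y)) x
    let c : ℝ := -(Real.log (p ⟨i, by omega⟩) - Real.log (p ⟨i + N, hi⟩)) /
      (p ⟨i, by omega⟩ - p ⟨i + N, hi⟩)
    ∃ W : ℝ → ℝ,
      (∀ ξ : ℝ,
        Filter.Tendsto (fun n : ℤ => w n (c * (n : ℝ) + ξ)) Filter.atTop (nhds (W ξ))) ∧
      Filter.Tendsto W Filter.atTop
        (nhds (∑ j ∈ Finset.univ.filter
          (fun j : Fin M => i + 1 ≤ (j : ℕ) ∧ (j : ℕ) < i + N + 1), p j)) ∧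
      Filter.Tendsto W Filter.atBot
        (nhds (∑ j ∈ Finset.univ.filter
          (fun j : Fin M => i ≤ (j : ℕ) ∧ (j : ℕ) < i + N), p j)) := by
  intro θ τ w c
  set u : Fin M := ⟨i, by omega⟩
  set v : Fin M := ⟨i + N, hi⟩
  have huv : u < v := Fin.mk_lt_mk.2 (by omega)
  have hcard : (Finset.Ico u v).card = N := by simp [u, v]
  have hτ : ∀ n x, τ n x = subsetTau (fun S => sqVandermonde p S *
      Real.exp (∑ j ∈ S, (θ0 j - t / p j))) (Real.log ∘ p) p N n x := by
    intro n x
    rw [← sum_strictMono_eq_subsetTau]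
    simp only [τ, θ, Function.comp_apply, add_sub_assoc', sub_add_eq_add_sub]
  obtain ⟨W, hW, hW_top, hW_bot⟩ := exists_tendsto_deriv_log_subsetTau strictConcaveOn_log_Ioi hp
    hpmono (fun S => mul_pos (sqVandermonde_pos hpmono.injective S) (Real.exp_pos _)) huv hcard
    (add_neg_slope_mul_eq (hpmono huv).ne _ _)
  refine ⟨W, fun ξ => ?_, ?_, ?_⟩
  · simp only [w, hτ]
    exact (hW ξ).comp tendsto_intCast_atTop_atTop
  · convert hW_top using 3
    ext j
    simp [u, v, Fin.le_def, Fin.lt_def]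
  · convert hW_bot using 3
    ext j
    simp [u, v, Fin.le_def, Fin.lt_def]
end

section
/- Let δ, κ > 0 and 0 < p_1 ≠ p_2. Define k_n = log p_1 − log p_2, k_m = −log(1+κ/p_1) + log(1+κ/p_2), and ω = −log(1+δ·p_1) + log(1+δ·p_2). Then these parameters satisfy the discrete dispersion relation (e^{−ω} − 1)(1 − e^{−k_m}) = δ·κ·( e^{−k_m + k_n} + e^{−ω − k_n} − e^{−ω − k_m} − 1 ). -/
/-!
Exponentiating the parameters makes the relation rational: `exp kn`, `exp (-km)` and `exp (-ω)`
are the ratios `N = p₁ / p₂`, `M = (1 + κ / p₁) / (1 + κ / p₂)` and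
`W = (1 + δ * p₁) / (1 + δ * p₂)`. The bracket on the right splits as
`(M * N - 1) - W * (M - N⁻¹)`, and both differences are multiples of `p₁ - p₂`. Each side of the
relation then equals `δ * κ * (p₁ - p₂) ^ 2 / ((1 + δ * p₂) * (p₁ * (p₂ + κ)))`.
-/

section Field

variable {K : Type*} [Field K] {δ κ p₁ p₂ : K}

theorem one_add_mul_div_one_add_mul_sub_one (hδ₂ : 1 + δ * p₂ ≠ 0) :
    (1 + δ * p₁) / (1 + δ * p₂) - 1 = δ * (p₁ - p₂) / (1 + δ * p₂) := by
  field_simp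
  ring

theorem one_add_div_div_one_add_div (h₁ : p₁ ≠ 0) (h₂ : p₂ ≠ 0) :
    (1 + κ / p₁) / (1 + κ / p₂) = p₂ * (p₁ + κ) / (p₁ * (p₂ + κ)) := by
  rw [one_add_div h₁, one_add_div h₂, div_div_div_eq, mul_comm (p₁ + κ)]

theorem toda_dispersion_lhs_eq (h₁ : p₁ ≠ 0) (h₂ : p₂ ≠ 0) (hκ₂ : p₂ + κ ≠ 0)
    (hδ₂ : 1 + δ * p₂ ≠ 0) :
    ((1 + δ * p₁) / (1 + δ * p₂) - 1) * (1 - (1 + κ / p₁) / (1 + κ / p₂)) =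
      δ * κ * (p₁ - p₂) ^ 2 / ((1 + δ * p₂) * (p₁ * (p₂ + κ))) := by
  have one_sub_M : 1 - (1 + κ / p₁) / (1 + κ / p₂) = κ * (p₁ - p₂) / (p₁ * (p₂ + κ)) := by
    rw [one_add_div_div_one_add_div h₁ h₂]
    field_simp
    ring
  rw [one_add_mul_div_one_add_mul_sub_one hδ₂, one_sub_M, div_mul_div_comm]
  ring

theorem toda_dispersion_bracket_eq (h₁ : p₁ ≠ 0) (h₂ : p₂ ≠ 0) (hκ₂ : p₂ + κ ≠ 0)
    (hδ₂ : 1 + δ * p₂ ≠ 0) :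
    (1 + κ / p₁) / (1 + κ / p₂) * (p₁ / p₂) + (1 + δ * p₁) / (1 + δ * p₂) / (p₁ / p₂) -
        (1 + δ * p₁) / (1 + δ * p₂) * ((1 + κ / p₁) / (1 + κ / p₂)) - 1 =
      (p₁ - p₂) ^ 2 / ((1 + δ * p₂) * (p₁ * (p₂ + κ))) := by
  rw [one_add_div_div_one_add_div h₁ h₂]
  set W := (1 + δ * p₁) / (1 + δ * p₂) with W_def
  set M := p₂ * (p₁ + κ) / (p₁ * (p₂ + κ)) with M_def
  have M_mul_N_sub_one : M * (p₁ / p₂) - 1 = (p₁ - p₂) * p₁ / (p₁ * (p₂ + κ)) := by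
    rw [M_def]
    field_simp
    ring
  have M_sub_inv_N : M - p₂ / p₁ = (p₁ - p₂) * p₂ / (p₁ * (p₂ + κ)) := by
    rw [M_def]
    field_simp
    ring
  have p₁_sub_W_mul_p₂ : p₁ - W * p₂ = (p₁ - p₂) / (1 + δ * p₂) := by
    rw [W_def]
    field_simp
    ring
  calc M * (p₁ / p₂) + W / (p₁ / p₂) - W * M - 1
      = (M * (p₁ / p₂) - 1) - W * (M - p₂ / p₁) := by
        rw [div_div_eq_mul_div, mul_div_assoc]
        ring
    _ = (p₁ - p₂) * (p₁ - W * p₂) / (p₁ * (p₂ + κ)) := by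
        rw [M_mul_N_sub_one, M_sub_inv_N]
        ring
    _ = (p₁ - p₂) ^ 2 / ((1 + δ * p₂) * (p₁ * (p₂ + κ))) := by
        rw [p₁_sub_W_mul_p₂, mul_div_assoc', div_div, sq]

theorem toda_dispersion_rational (h₁ : p₁ ≠ 0) (h₂ : p₂ ≠ 0) (hκ₂ : 1 + κ / p₂ ≠ 0)
    (hδ₂ : 1 + δ * p₂ ≠ 0) :
    ((1 + δ * p₁) / (1 + δ * p₂) - 1) * (1 - (1 + κ / p₁) / (1 + κ / p₂)) =
      δ * κ * ((1 + κ / p₁) / (1 + κ / p₂) * (p₁ / p₂) +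
        (1 + δ * p₁) / (1 + δ * p₂) / (p₁ / p₂) -
        (1 + δ * p₁) / (1 + δ * p₂) * ((1 + κ / p₁) / (1 + κ / p₂)) - 1) := by
  have p₂_add_κ_ne_zero : p₂ + κ ≠ 0 := by
    rw [one_add_div h₂] at hκ₂
    exact (div_ne_zero_iff.mp hκ₂).1
  rw [toda_dispersion_lhs_eq h₁ h₂ p₂_add_κ_ne_zero hδ₂,
    toda_dispersion_bracket_eq h₁ h₂ p₂_add_κ_ne_zero hδ₂, mul_div_assoc]

end Field

theorem exp_log_sub_log {x y : ℝ} (hx : 0 < x) (hy : 0 < y) :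
    Real.exp (Real.log x - Real.log y) = x / y := by
  rw [Real.exp_sub, Real.exp_log hx, Real.exp_log hy]

theorem exp_neg_neg_log_add_log {x y : ℝ} (hx : 0 < x) (hy : 0 < y) :
    Real.exp (-(-Real.log x + Real.log y)) = x / y := by
  rw [neg_add, neg_neg, ← sub_eq_add_neg, exp_log_sub_log hx hy]

theorem stmt_11_general (δ κ p₁ p₂ : ℝ) (h₁ : 0 < p₁) (h₂ : 0 < p₂)
    (hκ₁ : 0 < 1 + κ / p₁) (hκ₂ : 0 < 1 + κ / p₂)
    (hδ₁ : 0 < 1 + δ * p₁) (hδ₂ : 0 < 1 + δ * p₂)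
    (kn km ω : ℝ)
    (hkn : kn = Real.log p₁ - Real.log p₂)
    (hkm : km = -Real.log (1 + κ / p₁) + Real.log (1 + κ / p₂))
    (hω : ω = -Real.log (1 + δ * p₁) + Real.log (1 + δ * p₂)) :
    (Real.exp (-ω) - 1) * (1 - Real.exp (-km)) =
      δ * κ * (Real.exp (-km + kn) + Real.exp (-ω - kn) - Real.exp (-ω - km) - 1) := by
  have exp_kn : Real.exp kn = p₁ / p₂ := hkn ▸ exp_log_sub_log h₁ h₂
  have exp_neg_km : Real.exp (-km) = (1 + κ / p₁) / (1 + κ / p₂) :=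
    hkm ▸ exp_neg_neg_log_add_log hκ₁ hκ₂
  have exp_neg_ω : Real.exp (-ω) = (1 + δ * p₁) / (1 + δ * p₂) :=
    hω ▸ exp_neg_neg_log_add_log hδ₁ hδ₂
  rw [sub_eq_add_neg (-ω) km, Real.exp_add, Real.exp_add, Real.exp_sub,
    exp_kn, exp_neg_km, exp_neg_ω]
  exact toda_dispersion_rational h₁.ne' h₂.ne' hκ₂.ne' hδ₂.ne'

/-- the one-soliton parameters of the fully discrete 2D Toda
lattice satisfy the discrete dispersion relation. -/
theorem stmt_11 (δ κ p₁ p₂ : ℝ) (hδ : 0 < δ) (hκ : 0 < κ)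
    (h₁ : 0 < p₁) (h₂ : 0 < p₂) (hne : p₁ ≠ p₂)
    (kn km ω : ℝ)
    (hkn : kn = Real.log p₁ - Real.log p₂)
    (hkm : km = -Real.log (1 + κ / p₁) + Real.log (1 + κ / p₂))
    (hω : ω = -Real.log (1 + δ * p₁) + Real.log (1 + δ * p₂)) :
    (Real.exp (-ω) - 1) * (1 - Real.exp (-km)) =
      δ * κ * (Real.exp (-km + kn) + Real.exp (-ω - kn) - Real.exp (-ω - km) - 1) :=
  stmt_11_general δ κ p₁ p₂ h₁ h₂ (by positivity) (by positivity) (by positivity) (by positivity)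
    kn km ω hkn hkm hω
end

section
/- Let κ > 0, 0 < p_1 < p_2 < ⋯ < p_M, and let 1 ≤ i < j ≤ M. Then at c = c_{i,j} one has η_i(c) = η_j(c); moreover η_l(c) > η_i(c) for every l with i < l < j, and η_l(c) < η_i(c) for every l with l < i or l > j. Consequently σ_{i,j} := #{ l ∈ {1,…,M} : η_l(c_{i,j}) < η_i(c_{i,j}) } equals (i−1) + (M−j); equivalently, σ_{i,j} = s if and only if j = M − s + i − 1. -/
open scoped Classical

/-!
Put `x_l = log p_l`. For fixed `c` all the numbers `η_l(c)` are values `f(x_l)` of a single function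
`f(x) = c x - log (1 + κ e^{-x})`, which is strictly concave. The choice `c = c_{i,j}` makes
`f(x_i) = f(x_j)`, and a strictly concave function taking the same value at two points lies above
this value strictly between them and below it outside. Hence the indices counted by `σ_{i,j}` form
the complement of the interval `[i, j]`.
-/

section EqualValues

variable {𝕜 β : Type*} [Field 𝕜] [LinearOrder 𝕜] [IsStrictOrderedRing 𝕜]
  [AddCommMonoid β] [LinearOrder β] [IsOrderedAddMonoid β] [Module 𝕜 β] [PosSMulStrictMono 𝕜 β]
  {s : Set 𝕜} {f : 𝕜 → β} {a b x : 𝕜}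

lemma min_lt_of_strictConcaveOn_of_lt_of_lt (hf : StrictConcaveOn 𝕜 s f) (ha : a ∈ s) (hb : b ∈ s)
    (hax : a < x) (hxb : x < b) : min (f a) (f b) < f x :=
  hf.lt_on_openSegment ha hb (hax.trans hxb).ne (Ioo_subset_openSegment ⟨hax, hxb⟩)

lemma lt_apply_of_strictConcaveOn_of_mem_Ioo (hf : StrictConcaveOn 𝕜 s f) (ha : a ∈ s) (hb : b ∈ s)
    (hfab : f a = f b) (hx : x ∈ Set.Ioo a b) : f a < f x := by
  simpa only [← hfab, min_self] using min_lt_of_strictConcaveOn_of_lt_of_lt hf ha hb hx.1 hx.2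

lemma apply_lt_of_strictConcaveOn_of_notMem_Icc (hf : StrictConcaveOn 𝕜 s f) (ha : a ∈ s)
    (hb : b ∈ s) (hx : x ∈ s) (hab : a < b) (hfab : f a = f b) (hxab : x ∉ Set.Icc a b) :
    f x < f a := by
  rcases lt_or_ge x a with hxa | hax
  · have hmin : min (f x) (f b) < f a := min_lt_of_strictConcaveOn_of_lt_of_lt hf hx hb hxa hab
    exact (min_lt_iff.mp hmin).resolve_right hfab.not_gt
  · have hbx : b < x := not_le.mp fun hxb => hxab ⟨hax, hxb⟩
    have hmin : min (f a) (f x) < f b := min_lt_of_strictConcaveOn_of_lt_of_lt hf ha hx hab hbx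
    exact hfab ▸ (min_lt_iff.mp hmin).resolve_left hfab.not_lt

lemma apply_lt_iff_notMem_Icc_of_strictConcaveOn (hf : StrictConcaveOn 𝕜 s f) (ha : a ∈ s)
    (hb : b ∈ s) (hx : x ∈ s) (hab : a < b) (hfab : f a = f b) :
    f x < f a ↔ x ∉ Set.Icc a b := by
  refine ⟨fun hlt hxab => ?_, apply_lt_of_strictConcaveOn_of_notMem_Icc hf ha hb hx hab hfab⟩
  rcases Set.eq_endpoints_or_mem_Ioo_of_mem_Icc hxab with rfl | rfl | hxab
  · exact hlt.false
  · exact hlt.ne' hfab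
  · exact hlt.not_gt (lt_apply_of_strictConcaveOn_of_mem_Ioo hf ha hb hfab hxab)

end EqualValues

lemma card_compl_Icc_fin {n : ℕ} {i j : Fin n} (hij : i ≤ j) :
    (Finset.Icc i j)ᶜ.card = (i : ℕ) + (n - 1 - (j : ℕ)) := by
  rw [Finset.card_compl, Fin.card_Icc, Fintype.card_fin]
  lia

lemma slope_mul_sub_eq_slope_mul_sub {K : Type*} [Field K] {a b : K} (hab : a ≠ b) (u v : K) :
    (u - v) / (a - b) * a - u = (u - v) / (a - b) * b - v := by
  linear_combination div_mul_cancel₀ (u - v) (sub_ne_zero.mpr hab)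

section LineProfile

/-- The function through which `η_l(c)` depends on `p_l`: the value of the line `η_l` at `c` is
`lineProfile κ c (log p_l)`. The logarithmic variable makes it concave. -/
noncomputable def lineProfile (κ c x : ℝ) : ℝ :=
  c * x - Real.log (1 + κ * Real.exp (-x))

variable {κ : ℝ}

lemma lineProfile_log (κ c : ℝ) {q : ℝ} (hq : 0 < q) :
    lineProfile κ c (Real.log q) = c * Real.log q - Real.log (1 + κ / q) := by
  rw [lineProfile, Real.exp_neg, Real.exp_log hq, div_eq_mul_inv]

lemma hasDerivAt_lineProfile (hκ : 0 ≤ κ) (c x : ℝ) :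
    HasDerivAt (lineProfile κ c) (c + κ / (Real.exp x + κ)) x := by
  have harg : HasDerivAt (fun y : ℝ => 1 + κ * Real.exp (-y)) (κ * (Real.exp (-x) * -1)) x :=
    ((hasDerivAt_neg x).exp.const_mul κ).const_add 1
  have hpos : 0 < 1 + κ * Real.exp (-x) := by positivity
  refine (((hasDerivAt_id' x).const_mul c).sub (harg.log hpos.ne')).congr_deriv ?_
  rw [Real.exp_neg]
  field

lemma strictConcaveOn_lineProfile (hκ : 0 < κ) (c : ℝ) :
    StrictConcaveOn ℝ Set.univ (lineProfile κ c) := by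
  have hderiv := hasDerivAt_lineProfile hκ.le c
  refine StrictAnti.strictConcaveOn_univ_of_deriv
    (continuous_iff_continuousAt.mpr fun x => (hderiv x).continuousAt) fun x y hxy => ?_
  rw [(hderiv x).deriv, (hderiv y).deriv]
  gcongr

end LineProfile

/-- discrete analogue of STATEMENT 6, for the lines
`η_i(c) = c·log p_i − log(1+κ/p_i)`: at `c = c_{i,j}` one has
`η_i(c) = η_j(c)`; the lines `η_l` with `i < l < j` are above, all the others
are below, and the level of intersection `σ_{i,j}` equals `(i−1) + (M−j)`
(1-based); equivalently `σ_{i,j} = s` iff `j = M − s + i − 1`.  Indices here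
are 0-based, so the level is `i + (M − 1 − j)` and the equivalence reads
`j + s + 1 = M + i`. -/
theorem stmt_12 (κ : ℝ) (hκ : 0 < κ)
    (M : ℕ) (p : Fin M → ℝ) (hp : ∀ j, 0 < p j) (hpmono : StrictMono p)
    (i j : Fin M) (hij : i < j)
    (η : Fin M → ℝ → ℝ) (hη : ∀ l c, η l c = c * Real.log (p l) - Real.log (1 + κ / p l))
    (c : ℝ)
    (hc : c = (Real.log (1 + κ / p i) - Real.log (1 + κ / p j)) /
      (Real.log (p i) - Real.log (p j))) :
    η i c = η j c ∧
    (∀ l : Fin M, i < l → l < j → η i c < η l c) ∧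
    (∀ l : Fin M, l < i ∨ j < l → η l c < η i c) ∧
    (Finset.univ.filter (fun l : Fin M => η l c < η i c)).card = (i : ℕ) + (M - 1 - (j : ℕ)) ∧
    (∀ s : ℕ, (Finset.univ.filter (fun l : Fin M => η l c < η i c)).card = s ↔
        (j : ℕ) + s + 1 = M + (i : ℕ)) := by
  have hlog : StrictMono fun l => Real.log (p l) :=
    fun k l hkl => Real.log_lt_log (hp k) (hpmono hkl)
  have hprofile (l : Fin M) : η l c = lineProfile κ c (Real.log (p l)) := by
    rw [hη, lineProfile_log κ c (hp l)]
  have hconcave := strictConcaveOn_lineProfile hκ c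
  have heq : η i c = η j c := by
    rw [hη, hη, hc, slope_mul_sub_eq_slope_mul_sub (hlog hij).ne]
  have hvalues : lineProfile κ c (Real.log (p i)) = lineProfile κ c (Real.log (p j)) := by
    rwa [← hprofile, ← hprofile]
  have hbelow (l : Fin M) : η l c < η i c ↔ l ∈ (Finset.Icc i j)ᶜ := by
    rw [hprofile, hprofile, apply_lt_iff_notMem_Icc_of_strictConcaveOn hconcave trivial trivial
      trivial (hlog hij) hvalues, Finset.mem_compl, Finset.mem_Icc, Set.mem_Icc, hlog.le_iff_le,
      hlog.le_iff_le]
  have hcard : (Finset.univ.filter fun l => η l c < η i c).card = (i : ℕ) + (M - 1 - (j : ℕ)) := by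
    simp only [hbelow, Finset.filter_univ_mem, card_compl_Icc_fin hij.le]
  refine ⟨heq, fun l hil hlj => ?_, fun l hl => (hbelow l).mpr ?_, hcard, fun s => ?_⟩
  · rw [hprofile, hprofile]
    exact lt_apply_of_strictConcaveOn_of_mem_Ioo hconcave trivial trivial hvalues
      ⟨hlog hil, hlog hlj⟩
  · simpa only [Finset.mem_compl, Finset.mem_Icc, not_and_or, not_le] using hl
  · rw [hcard]
    lia
end

section
/- Fix integers P, Q, A. Then lim_{ε→0⁺} ε·log( 1 + e^{A/ε}·φ_ε(P)/φ_ε(Q) ) = max(0, Θ), where Θ = A + n·(P − Q) + l·( max(0, P − r) − max(0, Q − r) ) + m·( max(0, −Q − s) − max(0, −P − s) ). -/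
/-! Maslov dequantization: sending a positive function `f ε` to `lim ε log (f ε)` turns products
into sums, powers into multiples and sums into maxima, the last because
`max x y ≤ x + y ≤ 2 max x y` and `ε log 2 → 0`. The one-soliton τ-function is built from
exponentials `e^{a/ε}` by these operations, so its limit is obtained by translating it term by
term. -/

open Filter Topology

lemma max_log_le_log_add {x y : ℝ} (hx : 0 < x) (hy : 0 < y) :
    max (Real.log x) (Real.log y) ≤ Real.log (x + y) :=
  max_le (Real.log_le_log hx (by linarith)) (Real.log_le_log hy (by linarith))

lemma log_add_le_max_log_add_log_two {x y : ℝ} (hx : 0 < x) (hy : 0 < y) :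
    Real.log (x + y) ≤ max (Real.log x) (Real.log y) + Real.log 2 := by
  have hmax : 0 < max x y := lt_max_of_lt_left hx
  calc Real.log (x + y) ≤ Real.log (max x y * 2) := by
        apply Real.log_le_log (add_pos hx hy)
        linarith [le_max_left x y, le_max_right x y]
    _ = Real.log (max x y) + Real.log 2 := Real.log_mul hmax.ne' two_ne_zero
    _ = max (Real.log x) (Real.log y) + Real.log 2 := by
        rw [Real.strictMonoOn_log.monotoneOn.map_max hx hy]

/-- `f` has ultradiscrete limit `a`, that is `ε log (f ε) → a` as `ε → 0⁺`. Eventual positivity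
of `f` is required because `Real.log` takes the value `log |x|` at negative `x` and `0` at `0`. -/
structure HasUltradiscreteLimit (f : ℝ → ℝ) (a : ℝ) : Prop where
  eventually_pos : ∀ᶠ ε in 𝓝[>] 0, 0 < f ε
  tendsto_mul_log : Tendsto (fun ε => ε * Real.log (f ε)) (𝓝[>] 0) (𝓝 a)

namespace HasUltradiscreteLimit

variable {f g : ℝ → ℝ} {a b : ℝ}

lemma one : HasUltradiscreteLimit (fun _ => 1) 0 where
  eventually_pos := .of_forall fun _ => one_pos
  tendsto_mul_log := by simp

lemma exp_div (a : ℝ) : HasUltradiscreteLimit (fun ε => Real.exp (a / ε)) a where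
  eventually_pos := .of_forall fun _ => Real.exp_pos _
  tendsto_mul_log := by
    refine tendsto_const_nhds.congr' ?_
    filter_upwards [self_mem_nhdsWithin] with ε hε
    rw [Real.log_exp, mul_div_cancel₀ a (ne_of_gt hε)]

lemma mul (hf : HasUltradiscreteLimit f a) (hg : HasUltradiscreteLimit g b) :
    HasUltradiscreteLimit (fun ε => f ε * g ε) (a + b) where
  eventually_pos := by
    filter_upwards [hf.eventually_pos, hg.eventually_pos] with ε using mul_pos
  tendsto_mul_log := by
    refine (hf.tendsto_mul_log.add hg.tendsto_mul_log).congr' ?_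
    filter_upwards [hf.eventually_pos, hg.eventually_pos] with ε hfε hgε
    rw [Real.log_mul hfε.ne' hgε.ne', mul_add]

lemma rpow_const (hf : HasUltradiscreteLimit f a) (c : ℝ) :
    HasUltradiscreteLimit (fun ε => f ε ^ c) (c * a) where
  eventually_pos := by
    filter_upwards [hf.eventually_pos] with ε hfε using Real.rpow_pos_of_pos hfε c
  tendsto_mul_log := by
    refine (hf.tendsto_mul_log.const_mul c).congr' ?_
    filter_upwards [hf.eventually_pos] with ε hfε
    rw [Real.log_rpow hfε, mul_left_comm]

lemma div (hf : HasUltradiscreteLimit f a) (hg : HasUltradiscreteLimit g b) :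
    HasUltradiscreteLimit (fun ε => f ε / g ε) (a - b) where
  eventually_pos := by
    filter_upwards [hf.eventually_pos, hg.eventually_pos] with ε using div_pos
  tendsto_mul_log := by
    refine (hf.tendsto_mul_log.sub hg.tendsto_mul_log).congr' ?_
    filter_upwards [hf.eventually_pos, hg.eventually_pos] with ε hfε hgε
    rw [Real.log_div hfε.ne' hgε.ne', mul_sub]

lemma add (hf : HasUltradiscreteLimit f a) (hg : HasUltradiscreteLimit g b) :
    HasUltradiscreteLimit (fun ε => f ε + g ε) (max a b) where
  eventually_pos := by
    filter_upwards [hf.eventually_pos, hg.eventually_pos] with ε using add_pos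
  tendsto_mul_log := by
    have lower := hf.tendsto_mul_log.max hg.tendsto_mul_log
    have error : Tendsto (fun ε : ℝ => ε * Real.log 2) (𝓝[>] 0) (𝓝 0) :=
      ((continuous_mul_const (Real.log 2)).tendsto' 0 0 (zero_mul _)).mono_left nhdsWithin_le_nhds
    have upper := lower.add error
    rw [add_zero] at upper
    refine tendsto_of_tendsto_of_tendsto_of_le_of_le' lower upper ?_ ?_
    · filter_upwards [self_mem_nhdsWithin, hf.eventually_pos, hg.eventually_pos] with ε hε hfε hgε
      have hε : 0 ≤ ε := le_of_lt hε
      rw [← mul_max_of_nonneg _ _ hε]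
      exact mul_le_mul_of_nonneg_left (max_log_le_log_add hfε hgε) hε
    · filter_upwards [self_mem_nhdsWithin, hf.eventually_pos, hg.eventually_pos] with ε hε hfε hgε
      have hε : 0 ≤ ε := le_of_lt hε
      rw [← mul_max_of_nonneg _ _ hε, ← mul_add]
      exact mul_le_mul_of_nonneg_left (log_add_le_max_log_add_log_two hfε hgε) hε

end HasUltradiscreteLimit

/-- The function `φ_ε(P)` of the one-soliton solution, with `δ_ε = e^{-r/ε}`, `κ_ε = e^{-s/ε}` and
all parameters real; the bases of the real powers exceed `1`. -/
noncomputable def solitonFactor (l m n r s P ε : ℝ) : ℝ :=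
  Real.exp (n * P / ε) * (1 + Real.exp (-r / ε) * Real.exp (P / ε)) ^ l *
    (1 + Real.exp (-s / ε) * Real.exp (-P / ε)) ^ (-m)

lemma hasUltradiscreteLimit_one_add_exp_mul_exp (a b : ℝ) :
    HasUltradiscreteLimit (fun ε => 1 + Real.exp (a / ε) * Real.exp (b / ε)) (max 0 (a + b)) :=
  .add .one (.mul (.exp_div a) (.exp_div b))

lemma hasUltradiscreteLimit_solitonFactor (l m n r s P : ℝ) :
    HasUltradiscreteLimit (solitonFactor l m n r s P)
      (n * P + l * max 0 (P - r) - m * max 0 (-P - s)) := by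
  have hδ := (hasUltradiscreteLimit_one_add_exp_mul_exp (-r) P).rpow_const l
  have hκ := (hasUltradiscreteLimit_one_add_exp_mul_exp (-s) (-P)).rpow_const (-m)
  have hlimit : n * P + l * max 0 (P - r) - m * max 0 (-P - s) =
      n * P + l * max 0 (-r + P) + -m * max 0 (-s + -P) := by ring_nf
  rw [hlimit]
  exact ((HasUltradiscreteLimit.exp_div (n * P)).mul hδ).mul hκ

theorem stmt_16_general (l m n r s P Q A : ℝ) :
    Tendsto
      (fun ε => ε * Real.log (1 + Real.exp (A / ε) * solitonFactor l m n r s P ε /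
        solitonFactor l m n r s Q ε))
      (𝓝[>] 0)
      (𝓝 (max 0 (A + n * (P - Q) + l * (max 0 (P - r) - max 0 (Q - r)) +
        m * (max 0 (-Q - s) - max 0 (-P - s))))) := by
  have hφ := hasUltradiscreteLimit_solitonFactor l m n r s
  have hratio := ((HasUltradiscreteLimit.exp_div A).mul (hφ P)).div (hφ Q)
  convert (HasUltradiscreteLimit.one.add hratio).tendsto_mul_log using 3
  ring

/-- ultra-discrete limit of the one-soliton τ-function:
`ε·log(1 + e^{A/ε}·φ_ε(P)/φ_ε(Q)) → max(0, Θ)` as `ε → 0⁺`, with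
`Θ = A + n(P−Q) + l(max(0,P−r) − max(0,Q−r)) + m(max(0,−Q−s) − max(0,−P−s))`. -/
theorem stmt_16 (l m n : ℤ) (r s : ℕ) (P Q A : ℤ) :
    let φ : ℤ → ℝ → ℝ := fun Pp ε =>
      Real.exp ((n : ℝ) * (Pp : ℝ) / ε) *
        (1 + Real.exp (-(r : ℝ) / ε) * Real.exp ((Pp : ℝ) / ε)) ^ l *
        (1 + Real.exp (-(s : ℝ) / ε) * Real.exp (-(Pp : ℝ) / ε)) ^ (-m)
    let Θ : ℝ := (A : ℝ) + (n : ℝ) * ((P : ℝ) - (Q : ℝ)) +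
      (l : ℝ) * (max 0 ((P : ℝ) - (r : ℝ)) - max 0 ((Q : ℝ) - (r : ℝ))) +
      (m : ℝ) * (max 0 (-(Q : ℝ) - (s : ℝ)) - max 0 (-(P : ℝ) - (s : ℝ)))
    Filter.Tendsto
      (fun ε : ℝ => ε * Real.log (1 + Real.exp ((A : ℝ) / ε) * φ P ε / φ Q ε))
      (nhdsWithin 0 (Set.Ioi 0)) (nhds (max 0 Θ)) := by
  intro φ Θ
  have hφ (p : ℤ) (ε : ℝ) : φ p ε = solitonFactor l m n r s p ε := by
    simp only [φ, solitonFactor, ← Real.rpow_intCast, Int.cast_neg]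
  simpa only [hφ] using stmt_16_general l m n r s P Q A
end

section
/- Fix integers P_1 < P_2 < ⋯ < P_M, integers A_1,…,A_M, and 1 ≤ N ≤ M. For ε > 0 set p_i = e^{P_i/ε} and τ_ε = Σ_{1≤i_1<⋯<i_N≤M} ( ∏_{1≤j<l≤N} (p_{i_j} − p_{i_l})² )·∏_{j=1}^N e^{A_{i_j}/ε}·φ_ε(P_{i_j}). Then lim_{ε→0⁺} ε·log τ_ε = max over all 1 ≤ i_1 < ⋯ < i_N ≤ M of [ Σ_{j=1}^N R_{i_j} + 2·Σ_{j=2}^N (j−1)·P_{i_j} ], where R_i = A_i + n·P_i + l·max(0, P_i − r) − m·max(0, −P_i − s). -/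
open scoped Classical

/-!
As `ε → 0⁺`, the assignment `f ↦ lim ε log f` on eventually positive functions turns products into
sums, positive sums into maxima, and a difference with a strictly dominant first term into the limit
of that term. Each factor `(p_a - p_b)²` of the squared Vandermonde product, `a < b`, therefore
contributes `2 P_b`, and the position `b` occurs as the larger index exactly `b` times.
-/

open Filter Topology

/-- `f` is positive near `0⁺` and its ultradiscrete limit `lim_{ε → 0⁺} ε log (f ε)` is `a`.
Positivity is required because `Real.log x = log |x|` would otherwise admit functions for which
sums do not become maxima. -/
structure IsUltradiscreteLimit (f : ℝ → ℝ) (a : ℝ) : Prop where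
  eventually_pos : ∀ᶠ ε in 𝓝[>] 0, 0 < f ε
  tendsto : Tendsto (fun ε => ε * Real.log (f ε)) (𝓝[>] 0) (𝓝 a)

namespace IsUltradiscreteLimit

variable {f g h : ℝ → ℝ} {a b c : ℝ}

theorem exp_div (a : ℝ) : IsUltradiscreteLimit (fun ε => Real.exp (a / ε)) a where
  eventually_pos := .of_forall fun _ => Real.exp_pos _
  tendsto := by
    refine tendsto_const_nhds.congr' ?_
    filter_upwards [self_mem_nhdsWithin] with ε (hε : 0 < ε)
    rw [Real.log_exp, mul_div_cancel₀ a hε.ne']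

theorem of_tendsto_pos (hf : Tendsto f (𝓝[>] 0) (𝓝 c)) (hc : 0 < c) :
    IsUltradiscreteLimit f 0 where
  eventually_pos := hf.eventually_const_lt hc
  tendsto := by
    have hid : Tendsto (fun ε : ℝ => ε) (𝓝[>] 0) (𝓝 0) := nhdsWithin_le_nhds
    simpa only [zero_mul] using hid.mul (hf.log hc.ne')

theorem const (hc : 0 < c) : IsUltradiscreteLimit (fun _ => c) 0 :=
  of_tendsto_pos tendsto_const_nhds hc

theorem congr' (hf : IsUltradiscreteLimit f a) (hfg : f =ᶠ[𝓝[>] 0] g) :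
    IsUltradiscreteLimit g a where
  eventually_pos := by
    filter_upwards [hf.eventually_pos, hfg] with ε hpos heq using heq ▸ hpos
  tendsto := hf.tendsto.congr' (hfg.mono fun ε heq => by rw [heq])

theorem of_le_of_le (hf : IsUltradiscreteLimit f a) (hg : IsUltradiscreteLimit g a)
    (hfh : ∀ᶠ ε in 𝓝[>] 0, f ε ≤ h ε) (hhg : ∀ᶠ ε in 𝓝[>] 0, h ε ≤ g ε) :
    IsUltradiscreteLimit h a where
  eventually_pos := by
    filter_upwards [hf.eventually_pos, hfh] with ε hpos hle using hpos.trans_le hle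
  tendsto := by
    refine tendsto_of_tendsto_of_tendsto_of_le_of_le' hf.tendsto hg.tendsto ?_ ?_
    · filter_upwards [hf.eventually_pos, hfh, self_mem_nhdsWithin] with ε hpos hle (hε : 0 < ε)
      gcongr
    · filter_upwards [hf.eventually_pos, hfh, hhg, self_mem_nhdsWithin]
        with ε hpos hle hle' (hε : 0 < ε)
      have := hpos.trans_le hle
      gcongr

theorem mul (hf : IsUltradiscreteLimit f a) (hg : IsUltradiscreteLimit g b) :
    IsUltradiscreteLimit (fun ε => f ε * g ε) (a + b) where
  eventually_pos := by
    filter_upwards [hf.eventually_pos, hg.eventually_pos] with ε hf₀ hg₀ using mul_pos hf₀ hg₀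
  tendsto := by
    refine (hf.tendsto.add hg.tendsto).congr' ?_
    filter_upwards [hf.eventually_pos, hg.eventually_pos] with ε hf₀ hg₀
    rw [Real.log_mul hf₀.ne' hg₀.ne', mul_add]

theorem rpow (hf : IsUltradiscreteLimit f a) (p : ℝ) :
    IsUltradiscreteLimit (fun ε => f ε ^ p) (p * a) where
  eventually_pos := hf.eventually_pos.mono fun _ hpos => Real.rpow_pos_of_pos hpos p
  tendsto := by
    refine (hf.tendsto.const_mul p).congr' ?_
    filter_upwards [hf.eventually_pos] with ε hpos
    rw [Real.log_rpow hpos, mul_left_comm]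

theorem div (hf : IsUltradiscreteLimit f a) (hg : IsUltradiscreteLimit g b) :
    IsUltradiscreteLimit (fun ε => f ε / g ε) (a - b) := by
  simpa only [Real.rpow_neg_one, neg_one_mul, ← div_eq_mul_inv, ← sub_eq_add_neg]
    using hf.mul (hg.rpow (-1))

protected theorem max (hf : IsUltradiscreteLimit f a) (hg : IsUltradiscreteLimit g b) :
    IsUltradiscreteLimit (fun ε => max (f ε) (g ε)) (max a b) where
  eventually_pos := hf.eventually_pos.mono fun _ hpos => lt_max_of_lt_left hpos
  tendsto := by
    refine (hf.tendsto.max hg.tendsto).congr' ?_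
    filter_upwards [hf.eventually_pos, hg.eventually_pos, self_mem_nhdsWithin]
      with ε hf₀ hg₀ (hε : 0 < ε)
    rw [Real.strictMonoOn_log.monotoneOn.map_max hf₀ hg₀, mul_max_of_nonneg _ _ hε.le]

theorem add (hf : IsUltradiscreteLimit f a) (hg : IsUltradiscreteLimit g b) :
    IsUltradiscreteLimit (fun ε => f ε + g ε) (max a b) := by
  have hmax := hf.max hg
  have htwo_max : IsUltradiscreteLimit (fun ε => 2 * max (f ε) (g ε)) (max a b) := by
    simpa only [zero_add] using (const two_pos).mul hmax
  refine hmax.of_le_of_le htwo_max ?_ ?_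
  · filter_upwards [hf.eventually_pos, hg.eventually_pos] with ε hf₀ hg₀
    exact max_le_add_of_nonneg hf₀.le hg₀.le
  · refine .of_forall fun ε => ?_
    rw [two_mul]
    exact add_le_add (le_max_left _ _) (le_max_right _ _)

theorem tendsto_zero_of_neg (hf : IsUltradiscreteLimit f a) (ha : a < 0) :
    Tendsto f (𝓝[>] 0) (𝓝 0) := by
  have hlog : Tendsto (fun ε => ε⁻¹ * (ε * Real.log (f ε))) (𝓝[>] 0) atBot :=
    tendsto_inv_nhdsGT_zero.atTop_mul_neg ha hf.tendsto
  refine (Real.tendsto_exp_atBot.comp hlog).congr' ?_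
  filter_upwards [hf.eventually_pos, self_mem_nhdsWithin] with ε hpos (hε : 0 < ε)
  rw [Function.comp_apply, inv_mul_cancel_left₀ hε.ne', Real.exp_log hpos]

theorem sub (hf : IsUltradiscreteLimit f a) (hg : IsUltradiscreteLimit g b) (hba : b < a) :
    IsUltradiscreteLimit (fun ε => f ε - g ε) a := by
  have hratio : Tendsto (fun ε => g ε / f ε) (𝓝[>] 0) (𝓝 0) :=
    (hg.div hf).tendsto_zero_of_neg (sub_neg.mpr hba)
  have hfactor : IsUltradiscreteLimit (fun ε => 1 - g ε / f ε) 0 :=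
    of_tendsto_pos (by simpa only [sub_zero] using hratio.const_sub 1) one_pos
  rw [← add_zero a]
  refine (hf.mul hfactor).congr' ?_
  filter_upwards [hf.eventually_pos] with ε hpos
  rw [mul_sub, mul_one, mul_div_cancel₀ _ hpos.ne']

section BigOperators

variable {α : Type*} {F : α → ℝ → ℝ} {u : α → ℝ}

theorem prod (S : Finset α) (hF : ∀ i ∈ S, IsUltradiscreteLimit (F i) (u i)) :
    IsUltradiscreteLimit (fun ε => ∏ i ∈ S, F i ε) (∑ i ∈ S, u i) := by
  induction S using Finset.cons_induction with
  | empty => simpa only [Finset.prod_empty, Finset.sum_empty] using const one_pos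
  | cons i S hi ih =>
    simp only [Finset.prod_cons, Finset.sum_cons]
    exact (hF i (Finset.mem_cons_self i S)).mul
      (ih fun j hj => hF j (Finset.mem_cons_of_mem hj))

theorem sum {S : Finset α} (hS : S.Nonempty)
    (hF : ∀ i ∈ S, IsUltradiscreteLimit (F i) (u i)) :
    IsUltradiscreteLimit (fun ε => ∑ i ∈ S, F i ε) (S.sup' hS u) := by
  induction hS using Finset.Nonempty.cons_induction with
  | singleton i => simpa using hF i (Finset.mem_singleton_self i)
  | cons i S hi hS ih =>
    simp only [Finset.sum_cons, Finset.sup'_cons hS]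
    exact (hF i (Finset.mem_cons_self i S)).add
      (ih fun j hj => hF j (Finset.mem_cons_of_mem hj))

theorem sum_ite_zero [Fintype α] {p : α → Prop} [DecidablePred p] [Nonempty {i // p i}]
    (hF : ∀ i, p i → IsUltradiscreteLimit (F i) (u i)) :
    IsUltradiscreteLimit (fun ε => ∑ i, if p i then F i ε else 0) (⨆ i : {i // p i}, u i) := by
  have hsum := sum (F := fun i : {i // p i} => F i) Finset.univ_nonempty
    fun i _ => hF i i.2
  rw [Finset.sup'_univ_eq_ciSup] at hsum
  refine hsum.congr' (.of_forall fun ε => ?_)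
  dsimp only
  rw [← Finset.sum_filter]
  exact (Finset.sum_subtype _ (by simp) fun i => F i ε).symm

end BigOperators

end IsUltradiscreteLimit

theorem sum_sum_ite_lt_eq_sum_val_mul {R : Type*} [Semiring R] {N : ℕ} (c : Fin N → R) :
    ∑ a, ∑ b, (if a < b then c b else 0) = ∑ j : Fin N, ((j : ℕ) : R) * c j := by
  rw [Finset.sum_comm]
  refine Finset.sum_congr rfl fun b _ => ?_
  rw [← Finset.sum_filter, Finset.sum_const, nsmul_eq_mul, Finset.filter_gt_eq_Iio, Fin.card_Iio]

theorem isUltradiscreteLimit_sq_exp_sub_exp {x y : ℝ} (hxy : x < y) :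
    IsUltradiscreteLimit (fun ε => (Real.exp (x / ε) - Real.exp (y / ε)) ^ 2) (2 * y) := by
  have hdiff := (IsUltradiscreteLimit.exp_div y).sub (.exp_div x) hxy
  rw [two_mul]
  exact (hdiff.mul hdiff).congr' (.of_forall fun ε => by ring)

theorem isUltradiscreteLimit_vandermonde_sq {N : ℕ} {P : Fin N → ℝ} (hP : StrictMono P) :
    IsUltradiscreteLimit
      (fun ε => ∏ a, ∏ b,
        if a < b then (Real.exp (P a / ε) - Real.exp (P b / ε)) ^ 2 else 1)
      (2 * ∑ j : Fin N, ((j : ℕ) : ℝ) * P j) := by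
  rw [← sum_sum_ite_lt_eq_sum_val_mul]
  simp only [Finset.mul_sum, mul_ite, mul_zero]
  refine .prod _ fun a _ => .prod _ fun b _ => ?_
  split_ifs with hab
  · exact isUltradiscreteLimit_sq_exp_sub_exp (hP hab)
  · exact .const one_pos

theorem isUltradiscreteLimit_sum_strictMono {M N : ℕ} (hNM : N ≤ M) {P : Fin M → ℝ}
    (hP : StrictMono P) {w : Fin M → ℝ → ℝ} {R : Fin M → ℝ}
    (hw : ∀ i, IsUltradiscreteLimit (w i) (R i)) :
    IsUltradiscreteLimit
      (fun ε => ∑ ι : Fin N → Fin M,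
        if StrictMono ι then
          (∏ a, ∏ b,
            if a < b then (Real.exp (P (ι a) / ε) - Real.exp (P (ι b) / ε)) ^ 2 else 1) *
            ∏ j, w (ι j) ε
        else 0)
      (⨆ ι : {g : Fin N → Fin M // StrictMono g},
        ((∑ j, R (ι.1 j)) + 2 * ∑ j : Fin N, ((j : ℕ) : ℝ) * P (ι.1 j))) := by
  have : Nonempty {g : Fin N → Fin M // StrictMono g} := ⟨⟨_, Fin.strictMono_castLE hNM⟩⟩
  refine IsUltradiscreteLimit.sum_ite_zero (p := StrictMono)
    (u := fun ι : Fin N → Fin M => (∑ j, R (ι j)) + 2 * ∑ j : Fin N, ((j : ℕ) : ℝ) * P (ι j))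
    fun ι hι => ?_
  rw [add_comm]
  exact (isUltradiscreteLimit_vandermonde_sq (hP.comp hι)).mul (.prod _ fun j _ => hw (ι j))

/-- The weight `e^{A/ε} φ_ε(x)` of one index in the `τ`-function, where `x` is the value of `P` at
that index; all parameters, including the exponents `l` and `-m`, are real. -/
noncomputable def resonantWeight (l m n r s A x ε : ℝ) : ℝ :=
  Real.exp (A / ε) *
    (Real.exp (n * x / ε) * (1 + Real.exp (-r / ε) * Real.exp (x / ε)) ^ l *
      (1 + Real.exp (-s / ε) * Real.exp (-x / ε)) ^ (-m))

/-- The piecewise linear exponent `R` attached to an index with amplitude `A` and value `x` of `P`,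
which is the ultradiscrete limit of `resonantWeight`. -/
noncomputable def resonantExponent (l m n r s A x : ℝ) : ℝ :=
  A + n * x + l * max 0 (x - r) - m * max 0 (-x - s)

theorem isUltradiscreteLimit_one_add_exp_mul_exp (x y : ℝ) :
    IsUltradiscreteLimit (fun ε => 1 + Real.exp (-x / ε) * Real.exp (y / ε)) (max 0 (y - x)) := by
  rw [← neg_add_eq_sub]
  exact (IsUltradiscreteLimit.const one_pos).add ((IsUltradiscreteLimit.exp_div _).mul (.exp_div y))

theorem isUltradiscreteLimit_resonantWeight (l m n r s A x : ℝ) :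
    IsUltradiscreteLimit (resonantWeight l m n r s A x) (resonantExponent l m n r s A x) := by
  have hl := (isUltradiscreteLimit_one_add_exp_mul_exp r x).rpow l
  have hm := (isUltradiscreteLimit_one_add_exp_mul_exp s (-x)).rpow (-m)
  have hexponent : resonantExponent l m n r s A x =
      A + (n * x + l * max 0 (x - r) + -m * max 0 (-x - s)) := by
    rw [resonantExponent]
    ring
  rw [hexponent]
  exact (IsUltradiscreteLimit.exp_div A).mul (((IsUltradiscreteLimit.exp_div _).mul hl).mul hm)

theorem stmt_19_general (l m n r s : ℝ) {M N : ℕ} (hNM : N ≤ M) {P : Fin M → ℝ}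
    (hP : StrictMono P) (A : Fin M → ℝ) :
    Tendsto
      (fun ε => ε * Real.log (∑ ι : Fin N → Fin M,
        if StrictMono ι then
          (∏ a, ∏ b,
            if a < b then (Real.exp (P (ι a) / ε) - Real.exp (P (ι b) / ε)) ^ 2 else 1) *
            ∏ j, resonantWeight l m n r s (A (ι j)) (P (ι j)) ε
        else 0))
      (𝓝[>] 0)
      (𝓝 (⨆ ι : {g : Fin N → Fin M // StrictMono g},
        ((∑ j, resonantExponent l m n r s (A (ι.1 j)) (P (ι.1 j))) +
          2 * ∑ j : Fin N, ((j : ℕ) : ℝ) * P (ι.1 j)))) :=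
  (isUltradiscreteLimit_sum_strictMono hNM hP fun i =>
    isUltradiscreteLimit_resonantWeight l m n r s (A i) (P i)).tendsto

/-- ultra-discrete limit of the general resonant τ-function:
`ε·log τ_ε` tends, as `ε → 0⁺`, to the maximum over all strictly increasing
index tuples `i₁ < ⋯ < i_N` of `Σ_j R_{i_j} + 2·Σ_{j=2}^{N}(j−1)·P_{i_j}`,
where `R_i = A_i + n·P_i + l·max(0, P_i − r) − m·max(0, −P_i − s)`.
(Tuples are encoded as strictly monotone maps `Fin N → Fin M`; the 0-based
position `j` carries the weight `j`, matching the 1-based weight `j−1`.) -/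
theorem stmt_19 (lZ m n : ℤ) (r s : ℕ) (M N : ℕ) (hN : 1 ≤ N) (hNM : N ≤ M)
    (P : Fin M → ℤ) (hP : StrictMono P) (A : Fin M → ℤ) :
    let φ : ℤ → ℝ → ℝ := fun Pp ε =>
      Real.exp ((n : ℝ) * (Pp : ℝ) / ε) *
        (1 + Real.exp (-(r : ℝ) / ε) * Real.exp ((Pp : ℝ) / ε)) ^ lZ *
        (1 + Real.exp (-(s : ℝ) / ε) * Real.exp (-(Pp : ℝ) / ε)) ^ (-m)
    let R : Fin M → ℝ := fun i =>
      (A i : ℝ) + (n : ℝ) * (P i : ℝ) + (lZ : ℝ) * max 0 ((P i : ℝ) - (r : ℝ)) -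
        (m : ℝ) * max 0 (-(P i : ℝ) - (s : ℝ))
    let τ : ℝ → ℝ := fun ε =>
      ∑ ι : Fin N → Fin M,
        if StrictMono ι then
          (∏ a : Fin N, ∏ b : Fin N,
            if a < b then (Real.exp ((P (ι a) : ℝ) / ε) - Real.exp ((P (ι b) : ℝ) / ε)) ^ 2
            else 1) *
            ∏ j, (Real.exp ((A (ι j) : ℝ) / ε) * φ (P (ι j)) ε)
        else 0
    Filter.Tendsto (fun ε : ℝ => ε * Real.log (τ ε))
      (nhdsWithin 0 (Set.Ioi 0))
      (nhds (⨆ ι : {g : Fin N → Fin M // StrictMono g},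
        ((∑ j, R (ι.1 j)) + 2 * ∑ j : Fin N, ((j : ℕ) : ℝ) * (P (ι.1 j) : ℝ)))) := by
  simpa only [resonantWeight, resonantExponent, Function.comp_apply, ← Real.rpow_intCast,
    Int.cast_neg] using
    stmt_19_general lZ m n r s hNM (Int.cast_strictMono.comp hP) fun i => A i
end
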